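/- arXiv:0704.2899 — 3 statements merged into one kernel-verified Lean document; each statement's English description precedes it below -/
import Mathlib

section
/- For every integer n ≥ 1, the Baumslag–Solitar group BS(1,n), given by the presentation ⟨a, t ∣ t a t⁻¹ = aⁿ⟩, admits an injective group homomorphism into SL₂(ℝ), the group of 2×2 real matrices of determinant 1. -/
/-!
Every element of `BS(1,n)` has the form `t⁻ᵏ aᵐ tˡ` with `k, l ≥ 0`, since the relation lets
powers of `t` move rightwards past `a` and powers of `t⁻¹` move leftwards. So a homomorphism
`a ↦ A`, `t ↦ T` is injective as soon as `Aᵐ = Tʲ` forces `m = j = 0`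
(`exists_injective_of_independent`).

In `SL₂(ℝ)` take `A` to be the unipotent matrix with upper right entry `1`. For `n ≥ 2` take
`T = diag(√n, 1/√n)`: a diagonal matrix is unipotent only if it is trivial, and `√n > 1` has
infinite order. This `T` is trivial for `n = 1`, where the group is `ℤ²`; there `T` is the
unipotent matrix with entry `√2`, and irrationality of `√2` gives the independence.
-/


/-- Generators of the Baumslag–Solitar group `BS(1,n)`. -/
inductive BSGen : Type
  | a : BSGen
  | t : BSGen

/-- The single defining relator `t a t⁻¹ a⁻ⁿ` of `BS(1,n) = ⟨a, t ∣ t a t⁻¹ = aⁿ⟩`. -/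
def BSRels (n : ℕ) : Set (FreeGroup BSGen) :=
  {FreeGroup.of BSGen.t * FreeGroup.of BSGen.a * (FreeGroup.of BSGen.t)⁻¹ *
    (FreeGroup.of BSGen.a ^ n)⁻¹}

/-- Normal form in a quotient of `BS(1,n)`. -/
theorem exists_normalForm {G : Type*} [Group G] {a t : G} {n : ℕ}
    (h : t * a * t⁻¹ = a ^ n) (hG : Subgroup.closure {a, t} = ⊤) (g : G) :
    ∃ (k l : ℕ) (m : ℤ), g = (t ^ k)⁻¹ * a ^ m * t ^ l := by
  have hconj (m : ℤ) : t * a ^ m * t⁻¹ = a ^ (n * m) := by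
    rw [← conj_zpow, h, zpow_mul, zpow_natCast]
  have hconj_pow (k : ℕ) (m : ℤ) : t ^ k * a ^ m * (t ^ k)⁻¹ = a ^ (n ^ k * m) := by
    induction k with
    | zero => simp
    | succ k ih =>
      calc t ^ (k + 1) * a ^ m * (t ^ (k + 1))⁻¹
          = t * (t ^ k * a ^ m * (t ^ k)⁻¹) * t⁻¹ := by rw [pow_succ']; group
        _ = a ^ (n ^ (k + 1) * m : ℤ) := by rw [ih, hconj]; congr 1; ring
  have hleft (e : ℤ) (k l : ℕ) (m : ℤ) :
      a ^ e * ((t ^ k)⁻¹ * a ^ m * t ^ l) = (t ^ k)⁻¹ * a ^ (n ^ k * e + m) * t ^ l := by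
    rw [zpow_add, ← hconj_pow]
    simp only [mul_assoc, inv_mul_cancel_left]
  have hg : g ∈ Subgroup.closure {a, t} := hG ▸ Subgroup.mem_top g
  induction hg using Subgroup.closure_induction_left with
  | one => exact ⟨0, 0, 0, by simp⟩
  | mul_left x hx y _ ih =>
    obtain ⟨k, l, m, rfl⟩ := ih
    rcases hx with rfl | rfl
    · exact ⟨k, l, _, by simpa using hleft 1 k l m⟩
    · cases k with
      | zero =>
        refine ⟨0, l + 1, n * m, ?_⟩
        rw [← hconj, pow_succ']
        simp [mul_assoc]
      | succ k => exact ⟨k, l, m, by rw [pow_succ]; simp [mul_assoc]⟩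
  | inv_mul_cancel x hx y _ ih =>
    obtain ⟨k, l, m, rfl⟩ := ih
    rcases hx with rfl | rfl
    · exact ⟨k, l, _, by simpa using hleft (-1) k l m⟩
    · exact ⟨k + 1, l, m, by rw [pow_succ]; simp [mul_assoc]⟩

/-- A pair satisfying the defining relation whose powers meet only trivially generates a copy
of `BS(1,n)`. -/
theorem exists_injective_of_independent {H : Type*} [Group H] {n : ℕ} (A T : H)
    (h : T * A * T⁻¹ = A ^ n) (hind : ∀ m j : ℤ, A ^ m = T ^ j → m = 0 ∧ j = 0) :
    ∃ φ : PresentedGroup (BSRels n) →* H, Function.Injective φ := by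
  let f : BSGen → H := fun x => BSGen.casesOn x A T
  have hf : ∀ r ∈ BSRels n, FreeGroup.lift f r = 1 := by
    rintro r rfl
    simp [f, h]
  let a : PresentedGroup (BSRels n) := PresentedGroup.of BSGen.a
  let t : PresentedGroup (BSRels n) := PresentedGroup.of BSGen.t
  have hat : t * a * t⁻¹ = a ^ n := by
    have := PresentedGroup.one_of_mem (rels := BSRels n) rfl
    simp only [map_mul, map_inv, map_pow] at this
    exact mul_inv_eq_one.mp this
  have hgen : Subgroup.closure {a, t} = ⊤ := by
    rw [← PresentedGroup.closure_range_of (BSRels n)]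
    congr 1
    ext x
    constructor
    · rintro (rfl | rfl)
      exacts [⟨_, rfl⟩, ⟨_, rfl⟩]
    · rintro ⟨_ | _, rfl⟩
      exacts [Or.inl rfl, Or.inr rfl]
  refine ⟨PresentedGroup.toGroup hf, (injective_iff_map_eq_one _).mpr fun g hg => ?_⟩
  obtain ⟨k, l, m, rfl⟩ := exists_normalForm hat hgen g
  have ha : PresentedGroup.toGroup hf a = A := PresentedGroup.toGroup.of hf
  have ht : PresentedGroup.toGroup hf t = T := PresentedGroup.toGroup.of hf
  simp only [map_mul, map_inv, map_pow, map_zpow, ha, ht] at hg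
  have hAT : A ^ m = T ^ ((k : ℤ) - l) := by
    rw [zpow_sub, zpow_natCast, zpow_natCast, eq_mul_inv_iff_mul_eq]
    rwa [mul_assoc, inv_mul_eq_one, eq_comm] at hg
  obtain ⟨rfl, hkl⟩ := hind _ _ hAT
  obtain rfl : k = l := by omega
  simp

/-- The unipotent one-parameter subgroup `x ↦ !![1, x; 0, 1]`. -/
def unip : Multiplicative ℝ →* Matrix.SpecialLinearGroup (Fin 2) ℝ where
  toFun x := ⟨!![1, x.toAdd; 0, 1], by simp⟩
  map_one' := by ext i j; fin_cases i <;> fin_cases j <;> simp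
  map_mul' x y := by
    apply Subtype.ext
    change !![1, x.toAdd + y.toAdd; 0, 1] = !![1, x.toAdd; 0, 1] * !![1, y.toAdd; 0, 1]
    simp [add_comm]

theorem coe_unip (x : Multiplicative ℝ) : (unip x).1 = !![1, x.toAdd; 0, 1] := rfl

/-- The diagonal torus `s ↦ diag(s, s⁻¹)`. -/
def diag : ℝˣ →* Matrix.SpecialLinearGroup (Fin 2) ℝ where
  toFun s := ⟨!![(s : ℝ), 0; 0, (s⁻¹ : ℝˣ)], by simp⟩
  map_one' := by ext i j; fin_cases i <;> fin_cases j <;> simp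
  map_mul' x y := by
    apply Subtype.ext
    change !![((x * y : ℝˣ) : ℝ), 0; 0, ((x * y)⁻¹ : ℝˣ)] =
      !![(x : ℝ), 0; 0, (x⁻¹ : ℝˣ)] * !![(y : ℝ), 0; 0, (y⁻¹ : ℝˣ)]
    simp [mul_comm]

theorem coe_diag (s : ℝˣ) : (diag s).1 = !![(s : ℝ), 0; 0, (s⁻¹ : ℝˣ)] := rfl

theorem unip_injective {x y : Multiplicative ℝ} (h : unip x = unip y) :
    x.toAdd = y.toAdd :=
  congrArg (fun M => M.1 0 1) h

theorem unip_eq_diag {x : Multiplicative ℝ} {s : ℝˣ} (h : unip x = diag s) :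
    x.toAdd = 0 ∧ (s : ℝ) = 1 :=
  ⟨congrArg (fun M => M.1 0 1) h,
    (congrArg (fun M => M.1 0 0) h).symm⟩

theorem diag_conj_unip (s : ℝˣ) (x : ℝ) :
    diag s * unip (.ofAdd x) * (diag s)⁻¹ = unip (.ofAdd ((s : ℝ) ^ 2 * x)) := by
  rw [mul_inv_eq_iff_eq_mul]
  apply Subtype.ext
  rw [Matrix.SpecialLinearGroup.coe_mul, Matrix.SpecialLinearGroup.coe_mul]
  simp only [coe_unip, coe_diag]
  simp
  field_simp

/-- For every `n ≥ 1`, the Baumslag–Solitar group `BS(1,n) = ⟨a, t ∣ t a t⁻¹ = aⁿ⟩`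
embeds into `SL₂(ℝ)`. -/
theorem bs_one_n_embeds_into_SL2R (n : ℕ) (hn : 1 ≤ n) :
    ∃ φ : PresentedGroup (BSRels n) →* Matrix.SpecialLinearGroup (Fin 2) ℝ,
      Function.Injective φ := by
  rcases hn.eq_or_lt with rfl | hn
  · refine exists_injective_of_independent (unip (.ofAdd 1)) (unip (.ofAdd √2)) ?_ ?_
    · rw [← map_mul, mul_comm, map_mul, pow_one, mul_inv_cancel_right]
    · intro m j h
      rw [← map_zpow unip, ← map_zpow unip] at h
      have h' : (m : ℝ) = j * √2 := by simpa using unip_injective h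
      have hj : j = 0 := by
        by_contra hj
        exact (irrational_sqrt_two.intCast_mul hj).ne_int m h'.symm
      subst hj
      exact ⟨by simpa using h', rfl⟩
  · have hn1 : (1 : ℝ) < n := by exact_mod_cast hn
    have hs : 1 < √(n : ℝ) := Real.lt_sqrt_of_sq_lt (by simpa using hn1)
    let s : ℝˣ := Units.mk0 √(n : ℝ) (by positivity)
    refine exists_injective_of_independent (unip (.ofAdd 1)) (diag s) ?_ ?_
    · rw [diag_conj_unip, ← map_pow, ← ofAdd_nsmul]
      simp [s]
    · intro m j h
      rw [← map_zpow unip, ← map_zpow diag] at h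
      obtain ⟨hm, hj⟩ := unip_eq_diag h
      refine ⟨by simpa using hm, ?_⟩
      rw [Units.val_zpow_eq_zpow_val] at hj
      exact (zpow_eq_one_iff_right₀ (by positivity) hs.ne').mp hj
end

section
/- For every automorphism φ of the free group F₂ of rank 2, the ascending HNN extension HNN_φ(F₂), which in this case is the semidirect product F₂ ⋊_φ ℤ (the mapping torus of φ, where the generator of ℤ acts on F₂ by φ), is linear: there exist a positive integer n and an injective group homomorphism from F₂ ⋊_φ ℤ into GL_n(ℂ). -/
/-!
Let `B₄` be the braid group with Artin generators `s₀, s₁, s₂`. The elements `a = s₀ s₂⁻¹` and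
`b = s₁ a s₁⁻¹` generate a normal subgroup of `B₄`. The action of `B₄` on it by conjugation comes
from explicit automorphisms of `F₂`, under which `a` and `b` act as inner automorphisms by the basis
elements; as `F₂` has trivial centre, `a` and `b` are a free basis (`j_injective`). The mirror image
`sᵢ ↦ sᵢ⁻¹` of braids also preserves this copy of `F₂`, reversing its orientation (`j_flipAut`).

Let `ρ` be a faithful linear representation of `B₄`, and let `R` be the restriction to `F₂` of the
direct sum of `ρ` with its mirror image. The automorphisms of `F₂` that are induced by conjugation
by some matrix form a subgroup of `Aut F₂`. It contains the inner automorphisms, the action of the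
`sᵢ` and, by interchanging the two summands, the orientation-reversing automorphism given by the
mirror image. These generate `Aut F₂` by Nielsen's theorem (`mem_of_generators`), so every `φ` is
conjugation by a matrix `T` (`exists_intertwiner`). Then `(w, k) ↦ (R w * T ^ k, 2 ^ k)` is an
injective homomorphism from `F₂ ⋊ ℤ` into `GL₁₂(ℂ) × ℂˣ`, hence into `GL₁₃(ℂ)`.

Nielsen's theorem is proved by minimizing the total length of the images of the basis over the coset
of the subgroup in question. A minimal pair satisfies Nielsen's conditions; in the critical case of
the second one, half of a generator cancels on either side, and conjugation by that half shortens
the pair. The cancellation estimates are consequences of the hyperbolicity of the Cayley tree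
(`min_gp_le`).

The faithful representation `ρ` is that of Lawrence and Krammer, with `q = 1/2`, up to scaling, and
transcendental `t`. It determines its specialization at `t = 0`, whose matrices are nonnegative, so
that the set of zero rows of the matrix of a positive word is computed recursively by `step`. There
are only finitely many such sets, and a finite check shows that if the row of the `i`-th simple root
vanishes for a positive word, then `sᵢ` divides this word on the left (`exists_of_mem_zeroRows`).
By induction `ρ` is injective on positive words, and so on `B₄`, each element of which becomes
positive after multiplication by a power of Garside's braid `Δ`.
-/

namespace MappingTorus

/-! ### Lengths in free groups -/

section Length

variable {α : Type*} [DecidableEq α]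

open FreeGroup

/-- The length of the longest common prefix of two lists. -/
def lcp {β : Type*} [DecidableEq β] : List β → List β → ℕ
  | a :: l, b :: m => if a = b then lcp l m + 1 else 0
  | _, _ => 0

lemma min_lcp_le {β : Type*} [DecidableEq β] (l m k : List β) :
    min (lcp l k) (lcp k m) ≤ lcp l m := by
  induction l generalizing m k with
  | nil => simp [lcp]
  | cons a l ih =>
    cases m with
    | nil => cases k <;> simp [lcp]
    | cons b m =>
      cases k with
      | nil => simp [lcp]
      | cons c k =>
        have := ih m k
        simp only [lcp]
        split_ifs <;> grind

lemma norm_inv_mk_mul_mk {l m : List (α × Bool)} (hl : IsReduced l) (hm : IsReduced m) :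
    ((mk l)⁻¹ * mk m).norm + 2 * lcp l m = l.length + m.length := by
  have key {k : List (α × Bool)} (hk : IsReduced k) : (mk k).norm = k.length := by
    rw [FreeGroup.norm, toWord_mk, hk.reduce_eq]
  induction l generalizing m with
  | nil => simp [lcp, ← one_eq_mk, key hm]
  | cons a l ih =>
    cases m with
    | nil =>
      rw [← one_eq_mk, mul_one, norm_inv_eq, key hl]
      simp [lcp]
    | cons b m =>
      by_cases hab : a = b
      · subst hab
        have h := ih (m := m) (List.IsChain.tail hl) (List.IsChain.tail hm)
        have e (k : List (α × Bool)) : mk (a :: k) = mk [a] * mk k := by simp [mul_mk]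
        have e2 : (mk (a :: l))⁻¹ * mk (a :: m) = (mk l)⁻¹ * mk m := by
          rw [e l, e m]; group
        rw [e2]
        simp only [lcp, if_true, List.length_cons]
        omega
      · have hr : IsReduced (invRev (a :: l) ++ b :: m) := by
          have h1 : IsReduced (invRev (a :: l)) := by
            rw [isReduced_iff_reduce_eq, reduce_invRev, hl.reduce_eq]
          refine List.isChain_append.mpr ⟨h1, hm, ?_⟩
          intro x hx y hy
          simp [invRev] at hx hy
          subst hx hy
          intro h
          by_contra h2
          exact hab (Prod.ext h (by revert h2; cases a.2 <;> cases b.2 <;> simp))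
        rw [inv_mk, mul_mk, key hr]
        simp [lcp, hab]

/-- Twice the Gromov product `(g ∣ h)₁` in the Cayley tree of the free group. -/
def gp (g h : FreeGroup α) : ℤ := g.norm + h.norm - (g⁻¹ * h).norm

lemma gp_eq (g h : FreeGroup α) : gp g h = 2 * lcp g.toWord h.toWord := by
  have := norm_inv_mk_mul_mk (isReduced_toWord (x := g)) (isReduced_toWord (x := h))
  rw [mk_toWord, mk_toWord] at this
  simp only [gp, FreeGroup.norm] at *
  omega

/-- The Cayley tree is `0`-hyperbolic. -/
lemma min_gp_le (g h k : FreeGroup α) : min (gp g k) (gp k h) ≤ gp g h := by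
  have := min_lcp_le g.toWord h.toWord k.toWord
  simp only [gp_eq]
  omega

lemma norm_mul_parity (g h : FreeGroup α) :
    ∃ c : ℕ, (g * h).norm + 2 * c = g.norm + h.norm := by
  have := norm_inv_mk_mul_mk (isReduced_toWord (x := g⁻¹)) (isReduced_toWord (x := h))
  rw [mk_toWord, mk_toWord, inv_inv] at this
  exact ⟨_, by rw [this, ← FreeGroup.norm, ← FreeGroup.norm, norm_inv_eq]⟩

/-- Geodesics in the Cayley tree: `g` factors at any prescribed distance from the start. -/
lemma exists_factor_of_le_norm (g : FreeGroup α) (m : ℕ) (hm : m ≤ g.norm) :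
    ∃ r : FreeGroup α, r.norm = m ∧ (r⁻¹ * g).norm + m = g.norm := by
  have hc : IsReduced (g.toWord.take m ++ g.toWord.drop m) := by
    rw [List.take_append_drop]
    exact isReduced_toWord
  have hc := List.isChain_append.mp hc
  have h1 : (mk (g.toWord.take m)).norm = m := by
    rw [FreeGroup.norm, toWord_mk, IsReduced.reduce_eq hc.1]
    simpa [FreeGroup.norm] using hm
  have h2 : (mk (g.toWord.take m))⁻¹ * g = mk (g.toWord.drop m) := by
    rw [inv_mul_eq_iff_eq_mul, mul_mk, List.take_append_drop, mk_toWord]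
  refine ⟨mk (g.toWord.take m), h1, ?_⟩
  rw [h2, FreeGroup.norm, toWord_mk, IsReduced.reduce_eq hc.2.1]
  simp [FreeGroup.norm] at *
  omega

lemma norm_lt_norm_mul_self {g : FreeGroup α} (hg : g ≠ 1) : g.norm < (g * g).norm := by
  have h := reduceCyclically.reduce_flatten_replicate_succ (isReduced_toWord (x := g)) 1
  have h0 := reduceCyclically.conj_conjugator_reduceCyclically g.toWord
  have e : (g * g).toWord = reduce (List.replicate 2 g.toWord).flatten := by
    simp [toWord_mul, List.replicate]
  have l0 := congrArg List.length h0
  have l1 := congrArg List.length (e.trans h)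
  simp [List.replicate] at l0 l1
  have hne : (reduceCyclically g.toWord).length ≠ 0 := by
    intro hz
    rw [List.length_eq_zero_iff] at hz
    refine hg ?_
    rw [hz, List.append_nil] at h0
    rw [← mk_toWord (x := g), ← h0, ← mul_mk, ← inv_mk, mul_inv_cancel]
  simp only [FreeGroup.norm]
  omega

/-- A free group of rank at least two has trivial centre. -/
lemma eq_one_of_commute [Nontrivial α] {w : FreeGroup α}
    (h : ∀ i, of i * w = w * of i) : w = 1 := by
  rw [← toWord_eq_nil_iff]
  by_contra hw
  obtain ⟨s, L, hs⟩ := List.exists_cons_of_ne_nil hw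
  obtain ⟨i, hi⟩ := exists_ne s.1
  have hr : IsReduced ((i, true) :: s :: L) := by
    rw [isReduced_cons_cons]
    exact ⟨fun h => absurd h hi, hs ▸ isReduced_toWord⟩
  have e : (of i * w).toWord = (i, true) :: s :: L := by
    rw [toWord_mul, toWord_of, hs]; exact hr.reduce_eq
  have hsub := toWord_mul_sublist w (of i)
  rw [← h, e, hs, toWord_of] at hsub
  have := hsub.eq_of_length (by simp)
  simp at this
  exact hi (congrArg Prod.fst this.1)

end Length

/-! ### Nielsen's theorem in rank two -/

section Nielsen

open FreeGroup

/-- The free group of rank two. -/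
abbrev F₂ := FreeGroup (Fin 2)

/-- The complexity decreased in the Nielsen reduction: total length of the images of the basis. -/
def tot (φ : MulAut F₂) : ℕ := (φ (of 0)).norm + (φ (of 1)).norm

/-- If the images `φ l` of the letters satisfy the Nielsen conditions `(N1)` and `(N2)`
(the latter stated through lengths), cancellation in a product of letters is local. -/
lemma norm_map_cons_cons (φ : MulAut F₂)
    (N2 : ∀ x y z : Fin 2 × Bool, (x.1 = y.1 → x.2 = y.2) → (y.1 = z.1 → y.2 = z.2) →
      (φ (mk [x])).norm + (φ (mk [z])).norm <
        (φ (mk [x]) * φ (mk [y])).norm + (φ (mk [y]) * φ (mk [z])).norm)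
    (L : List (Fin 2 × Bool)) (y z : Fin 2 × Bool) (h : IsReduced (y :: z :: L)) :
    (φ (mk (y :: z :: L))).norm + (φ (mk [z])).norm =
      (φ (mk (z :: L))).norm + (φ (mk [y]) * φ (mk [z])).norm := by
  have e (x : Fin 2 × Bool) (k) : φ (mk (x :: k)) = φ (mk [x]) * φ (mk k) := by
    rw [← _root_.map_mul, mul_mk]; rfl
  induction L generalizing y z with
  | nil => rw [e y]; omega
  | cons t L ih =>
    rw [isReduced_cons_cons] at h
    have h2 := h.2
    rw [isReduced_cons_cons] at h2
    have I := ih z t h.2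
    have N := N2 y z t h.1 h2.1
    rw [e y (z :: t :: L)]
    rw [e z (t :: L)] at I ⊢
    generalize φ (mk (t :: L)) = S at *
    generalize φ (mk [y]) = Y at *
    generalize φ (mk [z]) = Z at *
    generalize φ (mk [t]) = T at *
    have a1 := min_gp_le (Y⁻¹) Z (Z * S)
    have a2 := min_gp_le (Y⁻¹) (Z * S) Z
    simp only [gp, inv_inv, norm_inv_eq, inv_mul_cancel_left, mul_inv_rev] at a1 a2
    have a3 : ((S⁻¹ * Z⁻¹) * Z).norm = S.norm := by
      rw [inv_mul_cancel_right, norm_inv_eq]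
    rw [a3] at a1
    omega

lemma norm_map_le_of_reduced (φ : MulAut F₂)
    (N1 : ∀ x y : Fin 2 × Bool, (x.1 = y.1 → x.2 = y.2) →
      (φ (mk [x])).norm ≤ (φ (mk [x]) * φ (mk [y])).norm ∧
      (φ (mk [y])).norm ≤ (φ (mk [x]) * φ (mk [y])).norm)
    (N2 : ∀ x y z : Fin 2 × Bool, (x.1 = y.1 → x.2 = y.2) → (y.1 = z.1 → y.2 = z.2) →
      (φ (mk [x])).norm + (φ (mk [z])).norm <
        (φ (mk [x]) * φ (mk [y])).norm + (φ (mk [y]) * φ (mk [z])).norm)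
    (L : List (Fin 2 × Bool)) (y z : Fin 2 × Bool) (h : IsReduced (y :: z :: L)) :
    2 ≤ (φ (mk (y :: z :: L))).norm := by
  have hpos (x : Fin 2 × Bool) : 1 ≤ (φ (mk [x])).norm := by
    rw [Nat.one_le_iff_ne_zero, Ne, FreeGroup.norm_eq_zero, map_eq_one_iff _ φ.injective]
    intro h
    have := congrArg FreeGroup.norm h
    rw [FreeGroup.norm, toWord_mk] at this
    simp at this
  induction L generalizing y z with
  | nil =>
    rw [isReduced_cons_cons] at h
    have e : φ (mk [y, z]) = φ (mk [y]) * φ (mk [z]) := by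
      rw [← _root_.map_mul, mul_mk]; rfl
    obtain ⟨c, hc⟩ := norm_mul_parity (φ (mk [y])) (φ (mk [z]))
    have := N1 y z h.1
    have := hpos y
    have := hpos z
    rw [e]
    omega
  | cons t L ih =>
    have key := norm_map_cons_cons φ N2 (t :: L) y z h
    rw [isReduced_cons_cons] at h
    have := ih z t h.2
    have := N1 y z h.1
    omega

/-- Failure of the Nielsen condition `(N2)` for the product `X * Y * X`, where half of `Y` cancels on
either side: conjugating by that half strictly shortens the pair `(X * Y, Y)`. -/
lemma exists_shorter_conj {X Y : F₂} (h1 : (X * Y).norm = X.norm) (h2 : (Y * X).norm = X.norm)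
    (h3 : Y.norm ≤ X.norm) :
    ∃ r : F₂, (r⁻¹ * (X * Y) * r).norm + (r⁻¹ * Y * r).norm ≤ X.norm := by
  obtain ⟨c, hc⟩ := norm_mul_parity X Y
  obtain ⟨r, hr, hr'⟩ := exists_factor_of_le_norm Y⁻¹ c (by rw [norm_inv_eq]; omega)
  refine ⟨r, ?_⟩
  obtain ⟨p, hp⟩ : ∃ p, p = r⁻¹ * Y⁻¹ := ⟨_, rfl⟩
  obtain rfl : Y = p⁻¹ * r⁻¹ := by rw [hp]; group
  rw [← hp, norm_inv_eq] at hr'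
  have e1 : r⁻¹ * (X * (p⁻¹ * r⁻¹)) * r = r⁻¹ * (X * p⁻¹) := by group
  have e2 : r⁻¹ * (p⁻¹ * r⁻¹) * r = r⁻¹ * p⁻¹ := by group
  rw [e1, e2]
  -- `r` is a prefix of `Y⁻¹`, which shares a prefix of the same length with `X`
  have a1 := min_gp_le r X (p⁻¹ * r⁻¹)⁻¹
  have a2 := min_gp_le p⁻¹ X⁻¹ (p⁻¹ * r⁻¹)
  have a3 := min_gp_le r (X * p⁻¹) X
  have t1 := norm_mul_le r⁻¹ p⁻¹
  have t2 := norm_mul_le (X * p⁻¹) p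
  have n1 : (r⁻¹ * (p⁻¹ * r⁻¹)⁻¹).norm = p.norm := by congr 1; group
  have n2 : ((p⁻¹ * r⁻¹)⁻¹ * X⁻¹).norm = (X * (p⁻¹ * r⁻¹)).norm := by
    rw [← norm_inv_eq]; congr 1; group
  have n3 : (p⁻¹⁻¹ * X⁻¹).norm = (X * p⁻¹).norm := by
    rw [← norm_inv_eq]; congr 1; group
  have n4 : (p⁻¹⁻¹ * (p⁻¹ * r⁻¹)).norm = r.norm := by
    rw [← norm_inv_eq]; congr 1; group
  have n5 : (X⁻¹ * (X * p⁻¹)).norm = p.norm := by rw [← norm_inv_eq]; congr 1; group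
  have n6 : (X * p⁻¹ * p).norm = X.norm := by congr 1; group
  rw [gp, gp, gp, n1, inv_inv, h2, norm_inv_eq] at a1
  rw [gp, gp, gp, n2, n3, n4, norm_inv_eq, norm_inv_eq] at a2
  rw [gp, gp, gp, n5] at a3
  rw [n6] at t2
  rw [norm_inv_eq, norm_inv_eq] at t1
  omega

/-- Nielsen's theorem in rank two: `Aut F₂` is generated by inner automorphisms and the elementary
automorphisms `a ↦ ab`, `a ↔ b`, `a ↦ a⁻¹`. -/
theorem mem_of_generators (H : Subgroup (MulAut F₂)) (hconj : ∀ p, MulAut.conj p ∈ H)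
    (hT : ∃ T ∈ H, T (of 0) = of 0 * of 1 ∧ T (of 1) = of 1)
    (hσ : ∃ σ ∈ H, σ (of 0) = of 1 ∧ σ (of 1) = of 0)
    (hν : ∃ ν ∈ H, ν (of 0) = (of 0)⁻¹ ∧ ν (of 1) = of 1) (φ : MulAut F₂) : φ ∈ H := by
  obtain ⟨T, hT, hT0, hT1⟩ := hT
  -- every signed permutation of the basis is available
  have signed (x y : Fin 2 × Bool) (hxy : x.1 ≠ y.1) :
      ∃ s ∈ H, s (of 0) = mk [x] ∧ s (of 1) = mk [y] := by
    obtain ⟨σ, hσ, hσ0, hσ1⟩ := hσ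
    obtain ⟨ν, hν, hν0, hν1⟩ := hν
    have inv (i : Fin 2) : mk [(i, false)] = (of i)⁻¹ := rfl
    have pos (i : Fin 2) : mk [(i, true)] = of i := rfl
    have hd (e f : Bool) : ∃ d ∈ H, d (of 0) = mk [(0, e)] ∧ d (of 1) = mk [(1, f)] := by
      have hμ := mul_mem (mul_mem hσ hν) hσ
      cases e <;> cases f <;> simp only [inv, pos]
      · exact ⟨_, mul_mem hν hμ, by simp [hσ0, hσ1, hν0, hν1], by simp [hσ0, hσ1, hν0, hν1]⟩
      · exact ⟨_, hν, hν0, hν1⟩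
      · exact ⟨_, hμ, by simp [hσ0, hσ1, hν1], by simp [hσ0, hσ1, hν0]⟩
      · exact ⟨_, one_mem H, by simp, by simp⟩
    obtain ⟨i, e⟩ := x
    obtain ⟨j, f⟩ := y
    obtain ⟨d, hd, hd0, hd1⟩ := hd e f
    fin_cases i <;> fin_cases j <;> try exact absurd rfl hxy
    · exact ⟨d, hd, hd0, hd1⟩
    · refine ⟨σ * d, mul_mem hσ hd, ?_, ?_⟩
      · cases e <;> simp_all
      · cases f <;> simp_all
  have htot (φ : MulAut F₂) (x y : Fin 2 × Bool) (hxy : x.1 ≠ y.1) :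
      tot φ = (φ (mk [x])).norm + (φ (mk [y])).norm := by
    have inv (i : Fin 2) : φ (mk [(i, false)]) = (φ (of i))⁻¹ := by rw [← _root_.map_inv]; rfl
    have hl (i : Fin 2) (e : Bool) : (φ (mk [(i, e)])).norm = (φ (of i)).norm := by
      cases e
      · rw [inv, norm_inv_eq]
      · rfl
    obtain ⟨i, e⟩ := x
    obtain ⟨j, f⟩ := y
    rw [hl, hl, tot]
    fin_cases i <;> fin_cases j <;> simp_all [add_comm]
  induction hn : tot φ using Nat.strong_induction_on generalizing φ with
  | _ n ih =>
  subst hn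
  by_contra hφ
  have hne (x : Fin 2 × Bool) : φ (mk [x]) ≠ 1 := by
    rw [Ne, map_eq_one_iff _ φ.injective]
    intro h
    have := congrArg FreeGroup.norm h
    rw [FreeGroup.norm, toWord_mk] at this
    simp at this
  have hpos (x : Fin 2 × Bool) : 1 ≤ (φ (mk [x])).norm := by
    rw [Nat.one_le_iff_ne_zero, Ne, FreeGroup.norm_eq_zero]
    exact hne x
  -- minimality of `φ`, tested against the Nielsen move `(x, y) ↦ (xy, y)` followed by conjugation
  have hmin (x y : Fin 2 × Bool) (hxy : x.1 ≠ y.1) (p : F₂) :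
      (φ (mk [x])).norm + (φ (mk [y])).norm ≤
        (p⁻¹ * (φ (mk [x]) * φ (mk [y])) * p).norm + (p⁻¹ * φ (mk [y]) * p).norm := by
    rw [← htot φ x y hxy]
    by_contra! hlt
    obtain ⟨s, hs, hs0, hs1⟩ := signed x y hxy
    have hm := ih (tot (MulAut.conj p⁻¹ * φ * s * T)) (by
      simpa [tot, hT0, hT1, hs0, hs1, -mul_mk] using hlt) (MulAut.conj p⁻¹ * φ * s * T) rfl
    refine hφ ?_
    rwa [H.mul_mem_cancel_right hT, H.mul_mem_cancel_right hs,
      H.mul_mem_cancel_left (hconj _)] at hm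
  have flip (x : Fin 2 × Bool) : φ (mk [(x.1, !x.2)]) = (φ (mk [x]))⁻¹ := by
    rw [← _root_.map_inv, inv_mk]; simp [invRev]
  have N1' (x y : Fin 2 × Bool) (hxy : x.1 ≠ y.1) :
      (φ (mk [x])).norm ≤ (φ (mk [x]) * φ (mk [y])).norm := by
    have := hmin x y hxy 1
    simp only [inv_one, one_mul, mul_one] at this
    omega
  have N1 (x y : Fin 2 × Bool) (hxy : x.1 = y.1 → x.2 = y.2) :
      (φ (mk [x])).norm ≤ (φ (mk [x]) * φ (mk [y])).norm ∧
      (φ (mk [y])).norm ≤ (φ (mk [x]) * φ (mk [y])).norm := by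
    by_cases h : x.1 = y.1
    · obtain rfl : x = y := Prod.ext h (hxy h)
      have := norm_lt_norm_mul_self (hne x)
      omega
    · refine ⟨N1' x y h, ?_⟩
      have := N1' (y.1, !y.2) (x.1, !x.2) (Ne.symm h)
      rwa [flip, flip, ← mul_inv_rev, norm_inv_eq, norm_inv_eq] at this
  have N2 (x y z : Fin 2 × Bool) (hxy : x.1 = y.1 → x.2 = y.2) (hyz : y.1 = z.1 → y.2 = z.2) :
      (φ (mk [x])).norm + (φ (mk [z])).norm <
        (φ (mk [x]) * φ (mk [y])).norm + (φ (mk [y]) * φ (mk [z])).norm := by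
    by_contra! hle
    have n1 := N1 x y hxy
    have n2 := N1 y z hyz
    have x_ne : x.1 ≠ y.1 := by
      intro h
      obtain rfl : x = y := Prod.ext h (hxy h)
      have := norm_lt_norm_mul_self (hne x)
      omega
    have z_ne : z.1 ≠ y.1 := by
      intro h
      obtain rfl : y = z := Prod.ext h.symm (hyz h.symm)
      have := norm_lt_norm_mul_self (hne y)
      omega
    have hxz : x.1 = z.1 := by omega
    by_cases hs : x.2 = z.2
    · -- `x = z`: half of `y` cancels on either side of `x`; conjugating by that half is shorter
      obtain rfl : x = z := Prod.ext hxz hs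
      obtain ⟨r, hr⟩ := exists_shorter_conj (X := φ (mk [x])) (Y := φ (mk [y]))
        (by omega) (by omega) (by omega)
      have := hmin x y x_ne r
      have := hpos y
      omega
    · -- `z = x⁻¹`: the first halves of `y` and of `y⁻¹` would agree
      obtain rfl : z = (x.1, !x.2) := by
        refine Prod.ext hxz.symm ?_
        revert hs
        cases x.2 <;> cases z.2 <;> simp
      rw [flip] at hle n2
      have h1 := norm_lt_norm_mul_self (inv_ne_one.mpr (hne y))
      generalize φ (mk [x]) = X at *
      generalize φ (mk [y]) = Y at *
      have a1 := min_gp_le Y Y⁻¹ X⁻¹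
      have e : (Y⁻¹ * X⁻¹).norm = (X * Y).norm := by rw [← norm_inv_eq]; simp
      have e' : (X * Y⁻¹).norm = (Y * X⁻¹).norm := by rw [← norm_inv_eq]; simp
      simp only [gp, norm_inv_eq, inv_inv, e, e'] at a1 h1 hle n2
      omega
  -- a Nielsen reduced basis is a signed permutation of the standard one
  have hlen (i : Fin 2) : ∃ x, φ.symm (of i) = mk [x] := by
    rcases hw : (φ.symm (of i)).toWord with _ | ⟨x, _ | ⟨y, L⟩⟩
    · rw [toWord_eq_nil_iff, map_eq_one_iff _ φ.symm.injective] at hw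
      exact absurd hw (of_ne_one i)
    · exact ⟨x, by rw [← hw, mk_toWord]⟩
    · have := norm_map_le_of_reduced φ N1 N2 L x y (hw ▸ isReduced_toWord)
      rw [← hw, mk_toWord, MulEquiv.apply_symm_apply, norm_of] at this
      omega
  obtain ⟨x, hx⟩ := hlen 0
  obtain ⟨y, hy⟩ := hlen 1
  have hxy : x.1 ≠ y.1 := by
    intro h
    have hx' : of 0 = φ (mk [x]) := by rw [← hx]; simp
    have hy' : of 1 = φ (mk [y]) := by rw [← hy]; simp
    by_cases h2 : x.2 = y.2
    · rw [Prod.ext h h2, ← hy'] at hx'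
      exact absurd (of_injective hx') (by simp)
    · obtain rfl : y = (x.1, !x.2) := by
        refine Prod.ext h.symm ?_
        revert h2
        cases x.2 <;> cases y.2 <;> simp
      rw [flip, ← hx'] at hy'
      have := congrArg toWord hy'
      simp [toWord_inv, invRev] at this
  obtain ⟨s, hs, hs0, hs1⟩ := signed x y hxy
  have : φ⁻¹ = s := by
    apply MulEquiv.toMonoidHom_injective
    refine FreeGroup.ext_hom _ _ ?_
    intro i
    fin_cases i
    · exact hx.trans hs0.symm
    · exact hy.trans hs1.symm
  exact hφ (inv_mem_iff.mp (this ▸ hs))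

end Nielsen

/-! ### The braid group on four strands -/

section Braid

/-- The relators of Artin's presentation of the braid group on four strands. -/
def braidRels : Set (FreeGroup (Fin 3)) :=
  {.of 0 * .of 1 * .of 0 * (.of 1 * .of 0 * .of 1)⁻¹,
    .of 1 * .of 2 * .of 1 * (.of 2 * .of 1 * .of 2)⁻¹,
    .of 0 * .of 2 * (.of 2 * .of 0)⁻¹}

/-- The braid group on four strands. -/
abbrev B₄ := PresentedGroup braidRels

/-- The Artin generators, numbered from `0`. -/
def s (i : Fin 3) : B₄ := PresentedGroup.of i

lemma braid01 : s 0 * s 1 * s 0 = s 1 * s 0 * s 1 := by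
  rw [← mul_inv_eq_one]
  exact PresentedGroup.one_of_mem (rels := braidRels) (by simp [braidRels])

lemma braid12 : s 1 * s 2 * s 1 = s 2 * s 1 * s 2 := by
  rw [← mul_inv_eq_one]
  exact PresentedGroup.one_of_mem (rels := braidRels) (by simp [braidRels])

lemma braid02 : s 0 * s 2 = s 2 * s 0 := by
  rw [← mul_inv_eq_one]
  exact PresentedGroup.one_of_mem (rels := braidRels) (by simp [braidRels])

/-- The universal property of the presentation of `B₄`. -/
def liftB {G : Type*} [Group G] (f : Fin 3 → G) (h01 : f 0 * f 1 * f 0 = f 1 * f 0 * f 1)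
    (h12 : f 1 * f 2 * f 1 = f 2 * f 1 * f 2) (h02 : f 0 * f 2 = f 2 * f 0) : B₄ →* G :=
  PresentedGroup.toGroup (f := f) (rels := braidRels) (by
    simp only [braidRels, Set.mem_insert_iff, Set.mem_singleton_iff]
    rintro r (rfl | rfl | rfl) <;>
      simp only [_root_.map_mul, _root_.map_inv, FreeGroup.lift_apply_of, h01, h12, h02,
        mul_inv_cancel])

@[simp] lemma liftB_s {G : Type*} [Group G] (f : Fin 3 → G) (h01 h12 h02) (i : Fin 3) :
    liftB f h01 h12 h02 (s i) = f i :=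
  PresentedGroup.toGroup.of _

lemma homB_ext {G : Type*} [Group G] {f g : B₄ →* G} (h : ∀ i, f (s i) = g (s i)) : f = g :=
  PresentedGroup.ext h

/-- The positive braid spelled by a word. -/
def word (w : List (Fin 3)) : B₄ := (w.map s).prod

@[simp] lemma word_nil : word [] = 1 := rfl

@[simp] lemma word_cons (i : Fin 3) (w : List (Fin 3)) : word (i :: w) = s i * word w := by
  simp [word]

@[simp] lemma word_append (v w : List (Fin 3)) : word (v ++ w) = word v * word w := by
  simp [word]

/-- Two distinct generators satisfy the braid relation of length three. -/
def adj (i j : Fin 3) : Bool := i.val + 1 = j.val || j.val + 1 = i.val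

lemma s_adj {i j : Fin 3} (h : adj i j) : s i * s j * s i = s j * s i * s j := by
  revert h
  fin_cases i <;> fin_cases j <;> simp [adj, braid01, braid12]

lemma s_comm {i j : Fin 3} (h : ¬ adj i j) : s i * s j = s j * s i := by
  revert h
  fin_cases i <;> fin_cases j <;> simp [adj, braid02]

/-- Search for a word `v` such that `s i * v` and `w` are the same positive braid.
The first argument bounds the depth of the recursion. If `w = j w'` with `s i ≠ s j`, the least
common multiple of `s i` and `s j` must divide `w`. -/
def extract : ℕ → Fin 3 → List (Fin 3) → Option (List (Fin 3))
  | 0, _, _ => none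
  | _, _, [] => none
  | n + 1, i, j :: w =>
    if i = j then some w
    else if adj i j then
      (extract n i w).bind fun x => (extract n j x).map fun y => j :: i :: y
    else (extract n i w).map fun x => j :: x

lemma word_of_extract {n : ℕ} {i : Fin 3} {w v : List (Fin 3)} (h : extract n i w = some v) :
    word w = s i * word v := by
  induction n generalizing i w v with
  | zero => simp [extract] at h
  | succ n ih =>
    cases w with
    | nil => simp [extract] at h
    | cons j w =>
      simp only [extract] at h
      split_ifs at h with h1 h2
      · simp_all
      · simp only [Option.bind_eq_some_iff, Option.map_eq_some_iff] at h
        obtain ⟨x, hx, y, hy, rfl⟩ := h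
        simp only [word_cons, ih hx, ih hy, ← mul_assoc, s_adj h2]
      · simp only [Option.map_eq_some_iff] at h
        obtain ⟨x, hx, rfl⟩ := h
        simp only [word_cons, ih hx, ← mul_assoc, s_comm h2]

/-- Search for a word `r` such that `v * r` and `w` are the same positive braid. -/
def extractWord : List (Fin 3) → List (Fin 3) → Option (List (Fin 3))
  | [], w => some w
  | i :: v, w => (extract 10 i w).bind (extractWord v)

lemma word_of_extractWord {v w r : List (Fin 3)} (h : extractWord v w = some r) :
    word w = word v * word r := by
  induction v generalizing w with
  | nil => simp_all [extractWord]
  | cons i v ih =>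
    simp only [extractWord, Option.bind_eq_some_iff] at h
    obtain ⟨x, hx, h⟩ := h
    rw [word_of_extract hx, ih h, word_cons, mul_assoc]

/-- A word for Garside's fundamental braid `Δ`. -/
def delta : List (Fin 3) := [0, 1, 0, 2, 1, 0]

lemma delta_mul_s (i : Fin 3) : word delta * s i = s i.rev * word delta := by
  have : ∀ i : Fin 3, extractWord (i.rev :: delta) (delta ++ [i]) = some [] := by decide +kernel
  simpa using word_of_extractWord (this i)

lemma delta_mul_word (w : List (Fin 3)) :
    word delta * word w = word (w.map Fin.rev) * word delta := by
  induction w with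
  | nil => simp
  | cons i w ih =>
    rw [word_cons, ← mul_assoc, delta_mul_s, mul_assoc, ih, List.map_cons, word_cons, mul_assoc]

lemma delta_pow_mul_word (k : ℕ) (w : List (Fin 3)) :
    ∃ v, word delta ^ k * word w = word v * word delta ^ k := by
  induction k generalizing w with
  | zero => exact ⟨w, by simp⟩
  | succ k ih =>
    obtain ⟨v, hv⟩ := ih (w.map Fin.rev)
    exact ⟨v, by rw [pow_succ, mul_assoc, delta_mul_word, ← mul_assoc, hv, mul_assoc]⟩

/-- Every braid becomes positive after multiplication by a power of `Δ`. -/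
lemma exists_delta_pow_mul (g : B₄) : ∃ k v, word delta ^ k * g = word v := by
  induction g using PresentedGroup.induction_on with
  | _ z =>
  induction z using FreeGroup.induction_on with
  | C1 => exact ⟨0, [], by simp⟩
  | of i => exact ⟨0, [i], by simp [s]; rfl⟩
  | inv_of i _ =>
    have : ∀ i : Fin 3, (extract 10 i.rev delta).isSome := by decide +kernel
    obtain ⟨x, hx⟩ := Option.isSome_iff_exists.mp (this i)
    refine ⟨1, x, ?_⟩
    rw [_root_.map_inv, mul_inv_eq_iff_eq_mul, pow_one]
    have h1 := delta_mul_s i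
    rw [word_of_extract hx, mul_assoc, mul_left_cancel_iff, ← word_of_extract hx] at h1
    exact h1.symm
  | mul x y hx hy =>
    obtain ⟨k, u, hu⟩ := hx
    obtain ⟨l, v, hv⟩ := hy
    obtain ⟨u', hu'⟩ := delta_pow_mul_word l u
    refine ⟨l + k, u' ++ v, ?_⟩
    rw [_root_.map_mul, pow_add, mul_assoc, ← mul_assoc (word delta ^ k), hu, ← mul_assoc, hu',
      mul_assoc, hv, word_append]

end Braid

/-! ### The Lawrence–Krammer representation -/

section LawrenceKrammer

open Matrix Polynomial

/-- The Lawrence–Krammer matrices at `t = 0`, `q = 1/2`, multiplied by `2`. The basis is indexed by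
the pairs `(1,2), (2,3), (3,4), (1,3), (2,4), (1,4)` of punctures, the first three being the simple
roots. All entries are nonnegative. -/
def P : Fin 3 → Matrix (Fin 6) (Fin 6) ℤ := ![
  !![0, 0, 0, 0, 0, 0; 0, 1, 0, 1, 0, 0; 0, 0, 2, 0, 0, 0;
     0, 2, 0, 0, 0, 0; 0, 0, 0, 0, 1, 1; 0, 0, 0, 0, 2, 0],
  !![1, 0, 0, 2, 0, 0; 0, 0, 0, 0, 0, 0; 0, 0, 1, 0, 1, 0;
     1, 0, 0, 0, 0, 0; 0, 0, 2, 0, 0, 0; 0, 0, 0, 0, 0, 2],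
  !![2, 0, 0, 0, 0, 0; 0, 1, 0, 0, 2, 0; 0, 0, 0, 0, 0, 0;
     0, 0, 0, 1, 0, 2; 0, 1, 0, 0, 0, 0; 0, 0, 0, 1, 0, 0]]

/-- The coefficient of `t / 8` in the same matrices: only the row of the simple root is nonzero. -/
def Q : Fin 3 → Matrix (Fin 6) (Fin 6) ℤ := ![
  !![4, 0, 0, -4, 0, -4; 0, 0, 0, 0, 0, 0; 0, 0, 0, 0, 0, 0;
     0, 0, 0, 0, 0, 0; 0, 0, 0, 0, 0, 0; 0, 0, 0, 0, 0, 0],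
  !![0, 0, 0, 0, 0, 0; 0, 4, 0, -2, -4, 2; 0, 0, 0, 0, 0, 0;
     0, 0, 0, 0, 0, 0; 0, 0, 0, 0, 0, 0; 0, 0, 0, 0, 0, 0],
  !![0, 0, 0, 0, 0, 0; 0, 0, 0, 0, 0, 0; 0, 0, 4, 0, -2, -1;
     0, 0, 0, 0, 0, 0; 0, 0, 0, 0, 0, 0; 0, 0, 0, 0, 0, 0]]

/-- The Lawrence–Krammer matrices, rescaled by `2` and with parameter `x = t / 8`. -/
def lk {R : Type*} [CommRing R] (x : R) (i : Fin 3) : Matrix (Fin 6) (Fin 6) R :=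
  (P i).map (Int.castRingHom R) + x • (Q i).map (Int.castRingHom R)

/-- Comparing coefficients of `x`. -/
lemma cubic_eq {R : Type*} [CommRing R] (x : R) {p p' p'' q q' q'' r r' r'' u u' u'' :
    Matrix (Fin 6) (Fin 6) ℤ}
    (h0 : p * p' * p'' = r * r' * r'')
    (h1 : q * p' * p'' + p * q' * p'' + p * p' * q'' = u * r' * r'' + r * u' * r'' + r * r' * u'')
    (h2 : q * q' * p'' + q * p' * q'' + p * q' * q'' = u * u' * r'' + u * r' * u'' + r * u' * u'')
    (h3 : q * q' * q'' = u * u' * u'') :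
    (p.map (Int.castRingHom R) + x • q.map (Int.castRingHom R)) *
      (p'.map (Int.castRingHom R) + x • q'.map (Int.castRingHom R)) *
      (p''.map (Int.castRingHom R) + x • q''.map (Int.castRingHom R)) =
    (r.map (Int.castRingHom R) + x • u.map (Int.castRingHom R)) *
      (r'.map (Int.castRingHom R) + x • u'.map (Int.castRingHom R)) *
      (r''.map (Int.castRingHom R) + x • u''.map (Int.castRingHom R)) := by
  have h0 := congrArg (Int.castRingHom R).mapMatrix h0
  have h1 := congrArg (Int.castRingHom R).mapMatrix h1
  have h2 := congrArg (Int.castRingHom R).mapMatrix h2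
  have h3 := congrArg (Int.castRingHom R).mapMatrix h3
  simp only [_root_.map_mul, _root_.map_add, RingHom.mapMatrix_apply] at h0 h1 h2 h3
  simp only [add_mul, mul_add, smul_mul_assoc, mul_smul_comm, smul_add, smul_smul]
  linear_combination (norm := module) h0 + x • h1 + (x * x) • h2 + (x * (x * x)) • h3

lemma lk_braid01 {R : Type*} [CommRing R] (x : R) :
    lk x 0 * lk x 1 * lk x 0 = lk x 1 * lk x 0 * lk x 1 := by
  apply cubic_eq <;> decide +kernel

lemma lk_braid12 {R : Type*} [CommRing R] (x : R) :
    lk x 1 * lk x 2 * lk x 1 = lk x 2 * lk x 1 * lk x 2 := by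
  apply cubic_eq <;> decide +kernel

lemma lk_braid02 {R : Type*} [CommRing R] (x : R) : lk x 0 * lk x 2 = lk x 2 * lk x 0 := by
  have := cubic_eq x (p := P 0) (p' := P 2) (p'' := 1) (q := Q 0) (q' := Q 2) (q'' := 0)
    (r := P 2) (r' := P 0) (r'' := 1) (u := Q 2) (u' := Q 0) (u'' := 0)
    (by decide +kernel) (by decide +kernel) (by decide +kernel) (by decide +kernel)
  simpa [lk] using this

lemma lk_det_ne_zero {x : ℂ} (hx : x ≠ 0) (i : Fin 3) : (lk x i).det ≠ 0 := by
  intro h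
  obtain ⟨v, hv, h⟩ := Matrix.exists_mulVec_eq_zero_iff.mpr h
  apply hv
  have e (j : Fin 6) := congrFun h j
  have e0 := e 0
  have e1 := e 1
  have e2 := e 2
  have e3 := e 3
  have e4 := e 4
  have e5 := e 5
  clear e h hv
  funext j
  fin_cases i <;>
    simp [lk, P, Q, Matrix.mulVec, dotProduct, Fin.sum_univ_succ] at e0 e1 e2 e3 e4 e5 <;>
    fin_cases j <;> simp_all

/-- The Lawrence–Krammer matrices as invertible complex matrices. -/
noncomputable def lkGL {x : ℂ} (hx : x ≠ 0) (i : Fin 3) : GL (Fin 6) ℂ :=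
  GeneralLinearGroup.mkOfDetNeZero (lk x i) (lk_det_ne_zero hx i)

/-- The Lawrence–Krammer representation of `B₄` at `q = 1/2`, rescaled. -/
noncomputable def rep {x : ℂ} (hx : x ≠ 0) : B₄ →* GL (Fin 6) ℂ :=
  liftB (lkGL hx) (Units.ext (lk_braid01 x)) (Units.ext (lk_braid12 x)) (Units.ext (lk_braid02 x))

/-- The product of the matrices `lk x i` along a word. -/
def lkWord {R : Type*} [CommRing R] (x : R) (w : List (Fin 3)) : Matrix (Fin 6) (Fin 6) R :=
  (w.map (lk x)).prod

lemma rep_word {x : ℂ} (hx : x ≠ 0) (w : List (Fin 3)) :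
    (rep hx (word w) : Matrix (Fin 6) (Fin 6) ℂ) = lkWord x w := by
  induction w with
  | nil => simp [lkWord]
  | cons i w ih =>
    have h : lkWord x (i :: w) = lk x i * lkWord x w := by simp [lkWord]
    rw [word_cons, _root_.map_mul, Units.val_mul, ih, h, rep, liftB_s]
    rfl

lemma map_lkWord {R S : Type*} [CommRing R] [CommRing S] (f : R →+* S) (x : R)
    (w : List (Fin 3)) : f.mapMatrix (lkWord x w) = lkWord (f x) w := by
  rw [lkWord, map_list_prod, List.map_map, lkWord]
  congr 2
  funext i
  ext a b
  simp [lk]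

/-- For transcendental `x`, the matrix of a positive word determines its specialization at `0`. -/
lemma lkWord_zero_eq {x : ℂ} (hx : Transcendental ℤ x) {u v : List (Fin 3)}
    (h : lkWord x u = lkWord x v) : lkWord (0 : ℤ) u = lkWord (0 : ℤ) v := by
  have hX : lkWord (X : ℤ[X]) u = lkWord X v := by
    have e (w) : (aeval x : ℤ[X] →ₐ[ℤ] ℂ).toRingHom.mapMatrix (lkWord X w) = lkWord x w := by
      rw [map_lkWord]; simp
    rw [← e, ← e] at h
    exact Matrix.map_injective (transcendental_iff_injective.mp hx) h
  have e (w) : (evalRingHom (0 : ℤ)).mapMatrix (lkWord X w) = lkWord 0 w := by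
    rw [map_lkWord]; simp
  rw [← e, ← e, hX]

/-- The effect of left multiplication by `s i` on the set of zero rows of a nonnegative matrix. -/
def step (i : Fin 3) (A : Finset (Fin 6)) : Finset (Fin 6) :=
  Finset.univ.filter fun a => Finset.univ.filter (fun b => P i a b ≠ 0) ⊆ A

/-- The set of zero rows of the matrix of a positive word at `x = 0`, see `mem_zeroRows_iff`. -/
def zeroRows (w : List (Fin 3)) : Finset (Fin 6) := w.foldr step ∅

lemma mem_zeroRows_iff (w : List (Fin 3)) (a : Fin 6) :
    a ∈ zeroRows w ↔ ∀ b, lkWord (0 : ℤ) w a b = 0 := by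
  have hP (i : Fin 3) (a b : Fin 6) : 0 ≤ P i a b := by
    revert b
    fin_cases i <;> fin_cases a <;> decide
  have hlk (i) : lk (0 : ℤ) i = P i := by ext; simp [lk]
  have hnn (w) : ∀ a b, 0 ≤ lkWord (0 : ℤ) w a b := by
    induction w with
    | nil =>
      intro a b
      simp only [lkWord, List.map_nil, List.prod_nil, one_apply]
      split_ifs <;> simp
    | cons i w ih =>
      intro a b
      rw [lkWord, List.map_cons, List.prod_cons, ← lkWord, hlk, mul_apply]
      exact Finset.sum_nonneg fun c _ => mul_nonneg (hP i a c) (ih c b)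
  induction w generalizing a with
  | nil =>
    simp only [zeroRows, List.foldr_nil, Finset.notMem_empty, false_iff, not_forall]
    exact ⟨a, by simp [lkWord]⟩
  | cons i w ih =>
    have hz : zeroRows (i :: w) = step i (zeroRows w) := rfl
    rw [hz, lkWord, List.map_cons, List.prod_cons, ← lkWord, hlk]
    simp only [step, Finset.subset_iff, Finset.mem_filter, Finset.mem_univ, true_and, ih, mul_apply]
    have this (b : Fin 6) := Finset.sum_eq_zero_iff_of_nonneg (s := Finset.univ)
      (f := fun c => P i a c * lkWord (0 : ℤ) w c b)
      fun c _ => mul_nonneg (hP i a c) (hnn w c b)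
    simp only [this, Finset.mem_univ, true_imp_iff, mul_eq_zero]
    grind

/-- Words for the twenty-four simple braids, i.e. the positive divisors of `Δ`. -/
def simples : List (List (Fin 3)) :=
  [[], [0]].flatMap fun a => [[], [1], [1, 0]].flatMap fun b =>
    [[], [2], [2, 1], [2, 1, 0]].map fun c => a ++ b ++ c

/-- The possible sets of zero rows of a positive braid, each paired with a simple braid dividing
that braid on the left. Apart from the inversion sets of the simple braids there is one more set,
which occurs for `s₁ s₁ s₀ s₂ s₁`. -/
def states : List (Finset (Fin 6) × List (Fin 3)) :=
  ({1, 5}, [1]) :: simples.map fun w => (zeroRows w, w)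

/-- Left multiplication by `s i` takes a state `(A, w)` to a state `(step i A, v)` such that `v`
divides `s i * w` on the left. -/
lemma states_step : ∀ p ∈ states, ∀ i, ∃ q ∈ states,
    q.1 = step i p.1 ∧ (extractWord q.2 (i :: p.2)).isSome := by
  decide +kernel

/-- If the `i`-th simple root belongs to a state `(A, w)`, then `s i` divides `w` on the left. -/
lemma states_simple : ∀ p ∈ states, ∀ i : Fin 3,
    Fin.castLE (by omega) i ∈ p.1 → (extract 10 i p.2).isSome := by
  decide +kernel

lemma exists_state (w : List (Fin 3)) :
    ∃ p ∈ states, p.1 = zeroRows w ∧ ∃ r, word w = word p.2 * word r := by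
  induction w with
  | nil => exact ⟨(∅, []), by decide +kernel, rfl, [], by simp⟩
  | cons i w ih =>
    obtain ⟨p, hp, hpw, r, hr⟩ := ih
    obtain ⟨q, hq, hqp, hx⟩ := states_step p hp i
    obtain ⟨x, hx⟩ := Option.isSome_iff_exists.mp hx
    have := word_of_extractWord hx
    refine ⟨q, hq, by rw [hqp, hpw]; rfl, x ++ r, ?_⟩
    rw [word_cons, hr, ← mul_assoc, ← word_cons, this, word_append, mul_assoc]

/-- The zero rows of the matrix at `x = 0` detect which generators divide a positive braid. -/
lemma exists_of_mem_zeroRows {w : List (Fin 3)} {i : Fin 3}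
    (h : Fin.castLE (by omega) i ∈ zeroRows w) : ∃ v, word w = s i * word v := by
  obtain ⟨p, hp, hpw, r, hr⟩ := exists_state w
  obtain ⟨x, hx⟩ := Option.isSome_iff_exists.mp (states_simple p hp i (hpw ▸ h))
  exact ⟨x ++ r, by rw [hr, word_of_extract hx, word_append, mul_assoc]⟩

lemma mem_zeroRows_cons (i : Fin 3) (w : List (Fin 3)) :
    Fin.castLE (by omega) i ∈ zeroRows (i :: w) := by
  have : ∀ (i : Fin 3) b, P i (Fin.castLE (by omega) i) b = 0 := by decide +kernel
  simp [zeroRows, step, this, Finset.subset_iff]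

lemma word_eq_of_rep_eq {x : ℂ} (hx : x ≠ 0) (ht : Transcendental ℤ x) {u v : List (Fin 3)}
    (h : rep hx (word u) = rep hx (word v)) : word u = word v := by
  induction u generalizing v with
  | nil =>
    cases v with
    | nil => rfl
    | cons i v =>
      have h0 := lkWord_zero_eq ht (u := []) (v := i :: v) (by rw [← rep_word hx, ← rep_word hx, h])
      have h1 := mem_zeroRows_cons i v
      rw [mem_zeroRows_iff, ← h0, ← mem_zeroRows_iff] at h1
      simp [zeroRows] at h1
  | cons i u ih =>
    have h0 := lkWord_zero_eq ht (u := i :: u) (v := v) (by rw [← rep_word hx, ← rep_word hx, h])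
    have h1 := mem_zeroRows_cons i u
    rw [mem_zeroRows_iff, h0, ← mem_zeroRows_iff] at h1
    obtain ⟨v', hv'⟩ := exists_of_mem_zeroRows h1
    rw [hv', word_cons, _root_.map_mul, _root_.map_mul, mul_right_inj] at h
    rw [hv', word_cons, ih h]

/-- Faithfulness of the Lawrence–Krammer representation of `B₄`. -/
theorem rep_injective {x : ℂ} (hx : x ≠ 0) (ht : Transcendental ℤ x) :
    Function.Injective (rep hx) := by
  rw [injective_iff_map_eq_one]
  intro g hg
  obtain ⟨k, v, hv⟩ := exists_delta_pow_mul g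
  have hk : word delta ^ k = word (List.replicate k delta).flatten := by
    simp [word]
  have := congrArg (rep hx) hv
  rw [_root_.map_mul, hg, mul_one, hk] at this
  rw [← word_eq_of_rep_eq hx ht this, hk] at hv
  simpa using hv

end LawrenceKrammer

/-! ### The free group inside the braid group -/

section Action

open FreeGroup

lemma aut_ext {φ ψ : MulAut F₂} (h0 : φ (of 0) = ψ (of 0)) (h1 : φ (of 1) = ψ (of 1)) : φ = ψ := by
  apply MulEquiv.toMonoidHom_injective
  refine FreeGroup.ext_hom _ _ fun i => ?_
  fin_cases i
  exacts [h0, h1]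

/-- The automorphism of `F₂` with prescribed images `a₀`, `b₀` of the basis, where the inverse is
the endomorphism with images `a₁`, `b₁`. -/
def mkAut (a₀ b₀ a₁ b₁ : F₂)
    (h0 : FreeGroup.lift ![a₁, b₁] a₀ = of 0) (h1 : FreeGroup.lift ![a₁, b₁] b₀ = of 1)
    (h2 : FreeGroup.lift ![a₀, b₀] a₁ = of 0) (h3 : FreeGroup.lift ![a₀, b₀] b₁ = of 1) :
    MulAut F₂ :=
  MonoidHom.toMulEquiv (FreeGroup.lift ![a₀, b₀]) (FreeGroup.lift ![a₁, b₁])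
    (FreeGroup.ext_hom _ _ fun i => by fin_cases i; exacts [by simpa using h0, by simpa using h1])
    (FreeGroup.ext_hom _ _ fun i => by fin_cases i; exacts [by simpa using h2, by simpa using h3])

/-- The automorphisms of `F₂` induced by conjugation by the generators of `B₄`, see `j_act`. -/
def act : Fin 3 → MulAut F₂ := ![
  mkAut (of 0) (of 1 * (of 0)⁻¹) (of 0) (of 1 * of 0)
    (by simp) (by simp) (by simp) (by simp),
  mkAut (of 1) (of 1 * (of 0)⁻¹ * of 1) (of 0 * (of 1)⁻¹ * of 0) (of 0)
    (by simp) (by simp) (by simp) (by simp),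
  mkAut (of 0) ((of 0)⁻¹ * of 1) (of 0) (of 0 * of 1)
    (by simp) (by simp) (by simp) (by simp)]

@[simp] lemma act_zero_zero : act 0 (of 0) = of 0 := by simp [act, mkAut]
@[simp] lemma act_zero_one : act 0 (of 1) = of 1 * (of 0)⁻¹ := by simp [act, mkAut]
@[simp] lemma act_one_zero : act 1 (of 0) = of 1 := by simp [act, mkAut]
@[simp] lemma act_one_one : act 1 (of 1) = of 1 * (of 0)⁻¹ * of 1 := by simp [act, mkAut]
@[simp] lemma act_two_zero : act 2 (of 0) = of 0 := by simp [act, mkAut]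
@[simp] lemma act_two_one : act 2 (of 1) = (of 0)⁻¹ * of 1 := by simp [act, mkAut]

/-- The orientation-reversing automorphism of `F₂` induced by the mirror image of braids. -/
def flipAut : MulAut F₂ :=
  mkAut (of 0)⁻¹ ((of 0)⁻¹ * of 1 * (of 0)⁻¹) (of 0)⁻¹ ((of 0)⁻¹ * of 1 * (of 0)⁻¹)
    (by simp) (by simp [mul_assoc]) (by simp) (by simp [mul_assoc])

@[simp] lemma flipAut_zero : flipAut (of 0) = (of 0)⁻¹ := by simp [flipAut, mkAut]
@[simp] lemma flipAut_one : flipAut (of 1) = (of 0)⁻¹ * of 1 * (of 0)⁻¹ := by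
  simp [flipAut, mkAut]

/-- The homomorphism `B₄ → Aut F₂` given by the automorphisms `act i`. -/
def actHom : B₄ →* MulAut F₂ :=
  liftB act (aut_ext (by simp) (by simp [mul_assoc]))
    (aut_ext (by simp [mul_assoc]) (by simp [mul_assoc]))
    (aut_ext (by simp) (by simp [mul_assoc]))

/-- The image in `B₄` of the first basis element of `F₂`. -/
def bA : B₄ := s 0 * (s 2)⁻¹

/-- The image in `B₄` of the second basis element of `F₂`. -/
def bB : B₄ := s 1 * bA * (s 1)⁻¹

/-- The homomorphism `F₂ → B₄` onto the normal subgroup generated by `s₀ s₂⁻¹`. -/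
def j : F₂ →* B₄ := FreeGroup.lift ![bA, bB]

@[simp] lemma j_zero : j (of 0) = bA := by simp [j]
@[simp] lemma j_one : j (of 1) = bB := by simp [j]

lemma s0_mul_bA : s 0 * bA = bA * s 0 := by
  have := braid02
  rw [bA, mul_assoc, mul_right_inj, eq_comm, inv_mul_eq_iff_eq_mul, ← mul_assoc, ← this,
    mul_inv_cancel_right]

lemma s2_mul_bA : s 2 * bA = bA * s 2 := by
  rw [bA, ← mul_assoc, ← braid02, mul_inv_cancel_right, inv_mul_cancel_right]

lemma s0_mul_bB : s 0 * bB = bB * s 2 := by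
  have h : s 1 * (s 2)⁻¹ * (s 1)⁻¹ = (s 2)⁻¹ * (s 1)⁻¹ * s 2 := by
    have := braid12
    rw [mul_inv_eq_iff_eq_mul, mul_inv_eq_iff_eq_mul, mul_assoc, mul_assoc, eq_comm,
      mul_assoc, inv_mul_eq_iff_eq_mul, inv_mul_eq_iff_eq_mul]
    simpa only [mul_assoc] using this.symm
  calc s 0 * bB = (s 0 * s 1 * s 0) * (s 2)⁻¹ * (s 1)⁻¹ := by simp only [bB, bA, mul_assoc]
    _ = s 1 * s 0 * (s 1 * (s 2)⁻¹ * (s 1)⁻¹) := by rw [braid01]; group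
    _ = bB * s 2 := by simp only [h, bB, bA, mul_assoc]

lemma conj0_bB : s 0 * bB * (s 0)⁻¹ = bB * bA⁻¹ := by
  rw [s0_mul_bB, bA]; group

lemma conj2_bB : s 2 * bB * (s 2)⁻¹ = bA⁻¹ * bB := by
  rw [bA, mul_inv_rev, inv_inv, mul_inv_eq_iff_eq_mul, mul_assoc, mul_assoc, ← s0_mul_bB]
  group

lemma conj1_bB : s 1 * bB * (s 1)⁻¹ = bB * bA⁻¹ * bB := by
  have h1 : (s 1)⁻¹ * (s 0)⁻¹ * s 1 = s 0 * (s 1)⁻¹ * (s 0)⁻¹ := by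
    rw [eq_mul_inv_iff_mul_eq, mul_assoc, mul_assoc, inv_mul_eq_iff_eq_mul, inv_mul_eq_iff_eq_mul,
      ← mul_assoc, ← mul_assoc, eq_mul_inv_iff_mul_eq, braid01]
  have h2 : (s 0)⁻¹ * bA = bA * (s 0)⁻¹ := by
    rw [inv_mul_eq_iff_eq_mul, ← mul_assoc, s0_mul_bA, mul_inv_cancel_right]
  calc s 1 * bB * (s 1)⁻¹ = s 1 * (bB * bA⁻¹ * bA) * (s 1)⁻¹ := by group
    _ = s 1 * s 0 * bB * ((s 0)⁻¹ * bA) * (s 1)⁻¹ := by rw [← conj0_bB]; group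
    _ = (s 1 * s 0 * s 1) * bA * (s 1)⁻¹ * bA * (s 0)⁻¹ * (s 1)⁻¹ := by rw [h2, bB]; group
    _ = s 0 * s 1 * (s 0 * bA) * (s 1)⁻¹ * bA * (s 0)⁻¹ * (s 1)⁻¹ := by rw [← braid01]; group
    _ = s 0 * s 1 * bA * (s 0 * (s 1)⁻¹) * ((s 0)⁻¹ * bA) * (s 1)⁻¹ := by
      rw [s0_mul_bA, h2]; group
    _ = s 0 * s 1 * bA * (s 0 * (s 1)⁻¹ * (s 0)⁻¹) * bA * (s 1)⁻¹ := by group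
    _ = s 0 * bB * (s 0)⁻¹ * bB := by rw [← h1, bB]; group
    _ = bB * bA⁻¹ * bB := by rw [conj0_bB]

lemma j_act (i : Fin 3) (w : F₂) : j (act i w) = s i * j w * (s i)⁻¹ := by
  have : j.comp (act i).toMonoidHom = (MulAut.conj (s i)).toMonoidHom.comp j := by
    refine FreeGroup.ext_hom _ _ fun k => ?_
    fin_cases i <;> fin_cases k
    · simp [s0_mul_bA]
    · simp [conj0_bB]
    · simp [bB]
    · simp [conj1_bB]
    · simp [s2_mul_bA]
    · simp [conj2_bB]
  exact DFunLike.congr_fun this w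

/-- Elements of `F₂ ⊆ B₄` act on `F₂` by inner automorphisms. -/
lemma actHom_j (w : F₂) : actHom (j w) = MulAut.conj w := by
  have hA : actHom bA = MulAut.conj (of 0) := by
    rw [bA, _root_.map_mul, _root_.map_inv, mul_inv_eq_iff_eq_mul, actHom, liftB_s, liftB_s]
    exact aut_ext (by simp) (by simp)
  have : actHom.comp j = MulAut.conj := by
    refine FreeGroup.ext_hom _ _ fun k => ?_
    fin_cases k
    · simpa using hA
    · have h1 : actHom (s 1) = act 1 := liftB_s ..
      simp only [MonoidHom.comp_apply, Fin.mk_one, j_one, bB, _root_.map_mul, _root_.map_inv, hA,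
        h1, mul_inv_eq_iff_eq_mul]
      exact aut_ext (by simp) (by simp [mul_assoc])
  exact DFunLike.congr_fun this w

/-- `F₂ → B₄` is injective since `F₂` has trivial centre. -/
lemma j_injective : Function.Injective j := by
  rw [injective_iff_map_eq_one]
  intro w hw
  have h := actHom_j w
  rw [hw, _root_.map_one] at h
  refine eq_one_of_commute fun i => ?_
  have := DFunLike.congr_fun h (of i)
  rw [MulAut.one_apply, MulAut.conj_apply, eq_mul_inv_iff_mul_eq] at this
  exact this

/-- The mirror image of braids. -/
def mirror : B₄ →* B₄ :=
  liftB (fun i => (s i)⁻¹) (by simpa [mul_assoc] using congrArg (·⁻¹) braid01)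
    (by simpa [mul_assoc] using congrArg (·⁻¹) braid12)
    (by simpa [mul_assoc] using congrArg (·⁻¹) braid02.symm)

@[simp] lemma mirror_s (i : Fin 3) : mirror (s i) = (s i)⁻¹ := liftB_s ..

lemma mirror_mirror (g : B₄) : mirror (mirror g) = g := by
  have : mirror.comp mirror = MonoidHom.id B₄ := homB_ext (by simp)
  exact DFunLike.congr_fun this g

lemma j_flipAut (w : F₂) : j (flipAut w) = mirror (j w) := by
  have hA : mirror bA = bA⁻¹ := by
    rw [bA, _root_.map_mul, _root_.map_inv, mirror_s, mirror_s, inv_inv, mul_inv_rev, inv_inv,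
      inv_mul_eq_iff_eq_mul, ← mul_assoc, braid02, mul_inv_cancel_right]
  have : j.comp flipAut.toMonoidHom = mirror.comp j := by
    refine FreeGroup.ext_hom _ _ fun k => ?_
    fin_cases k
    · simp [hA]
    · have h1 : s 1 * bB * (s 1)⁻¹ = s 1 * bA * (s 1)⁻¹ * bA⁻¹ * (s 1 * bA * (s 1)⁻¹) := conj1_bB
      have h2 : bB = bA * ((s 1)⁻¹ * bA⁻¹ * s 1) * bA := by
        apply (MulAut.conj (s 1)).injective
        simp only [MulAut.conj_apply]
        rw [h1]; group
      simp only [MonoidHom.comp_apply, Fin.mk_one, j_one, MulEquiv.coe_toMonoidHom, flipAut_one,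
        _root_.map_mul, _root_.map_inv, j_zero]
      conv_rhs => rw [bB]
      rw [_root_.map_mul, _root_.map_mul, _root_.map_inv, hA, mirror_s, h2]
      group
  exact DFunLike.congr_fun this w

end Action

/-! ### Realizing automorphisms by conjugation -/

section Linear

open FreeGroup Matrix

/-- Block diagonal invertible matrices. -/
noncomputable def blockDiag (m n : Type*) [Fintype m] [DecidableEq m] [Fintype n] [DecidableEq n] :
    GL m ℂ × GL n ℂ →* GL (m ⊕ n) ℂ :=
  (Units.map
    { toFun := fun p : Matrix m m ℂ × Matrix n n ℂ => fromBlocks p.1 0 0 p.2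
      map_one' := fromBlocks_one
      map_mul' := fun p q => by simp [fromBlocks_multiply] }).comp
  (MulEquiv.prodUnits (M := Matrix m m ℂ) (N := Matrix n n ℂ)).symm.toMonoidHom

lemma coe_blockDiag {m n : Type*} [Fintype m] [DecidableEq m] [Fintype n] [DecidableEq n]
    (p : GL m ℂ × GL n ℂ) : (blockDiag m n p : Matrix (m ⊕ n) (m ⊕ n) ℂ) =
      fromBlocks (p.1 : Matrix m m ℂ) 0 0 (p.2 : Matrix n n ℂ) := rfl

lemma blockDiag_injective (m n : Type*) [Fintype m] [DecidableEq m] [Fintype n] [DecidableEq n] :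
    Function.Injective (blockDiag m n) := by
  intro p q h
  have := congrArg (Units.val) h
  rw [coe_blockDiag, coe_blockDiag, fromBlocks_inj] at this
  exact Prod.ext (Units.ext this.1) (Units.ext this.2.2.2)

/-- For a homomorphism `R : F₂ → Γ`, the pairs `(φ, T)` such that conjugation by `T` extends `φ`. -/
def intertwiners {Γ : Type*} [Group Γ] (R : F₂ →* Γ) : Subgroup (MulAut F₂ × Γ) where
  carrier := {p | ∀ w, R (p.1 w) = p.2 * R w * p.2⁻¹}
  one_mem' := by simp
  mul_mem' := by
    intro p q hp hq w
    simp [hp _, hq w, mul_assoc]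
  inv_mem' := by
    intro p hp w
    have := hp (p.1⁻¹ w)
    rw [MulAut.apply_inv_self] at this
    simp only [Prod.fst_inv, Prod.snd_inv, this]
    group

/-- The direct sum of the Lawrence–Krammer representation and its mirror image, restricted to
`F₂`. -/
noncomputable def doubleRep {x : ℂ} (hx : x ≠ 0) : F₂ →* GL (Fin 6 ⊕ Fin 6) ℂ :=
  (blockDiag _ _).comp (((rep hx).comp j).prod ((rep hx).comp (mirror.comp j)))

lemma doubleRep_apply {x : ℂ} (hx : x ≠ 0) (w : F₂) :
    doubleRep hx w = blockDiag _ _ (rep hx (j w), rep hx (mirror (j w))) := rfl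

lemma doubleRep_injective {x : ℂ} (hx : x ≠ 0) (ht : Transcendental ℤ x) :
    Function.Injective (doubleRep hx) := by
  intro v w h
  have := congrArg Prod.fst (blockDiag_injective _ _ h)
  exact j_injective (rep_injective hx ht this)

/-- The matrix interchanging the two summands. -/
noncomputable def swapGL (m : Type*) [Fintype m] [DecidableEq m] : GL (m ⊕ m) ℂ where
  val := fromBlocks 0 1 1 0
  inv := fromBlocks 0 1 1 0
  val_inv := by simp [fromBlocks_multiply]
  inv_val := by simp [fromBlocks_multiply]

/-- Every automorphism of `F₂` is induced by a conjugation in the general linear group. -/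
lemma exists_intertwiner {x : ℂ} (hx : x ≠ 0) (φ : MulAut F₂) :
    ∃ T, (φ, T) ∈ intertwiners (doubleRep hx) := by
  suffices h : φ ∈ (intertwiners (doubleRep hx)).map (MonoidHom.fst _ _) by
    obtain ⟨⟨_, T⟩, hT, rfl⟩ := h
    exact ⟨T, hT⟩
  set H := (intertwiners (doubleRep hx)).map (MonoidHom.fst _ _)
  have mem {φ : MulAut F₂} (T) (h : ∀ w, doubleRep hx (φ w) = T * doubleRep hx w * T⁻¹) :
      φ ∈ H := ⟨(φ, T), h, rfl⟩
  have hconj (p : F₂) : MulAut.conj p ∈ H := mem (doubleRep hx p) (by simp)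
  have hact (i : Fin 3) : act i ∈ H := by
    refine mem (blockDiag _ _ (rep hx (s i), rep hx (mirror (s i)))) fun w => ?_
    simp only [doubleRep_apply, j_act, ← _root_.map_mul, ← _root_.map_inv, Prod.mk_mul_mk,
      Prod.inv_mk]
  have hflip : flipAut ∈ H := by
    refine mem (swapGL _) fun w => ?_
    rw [eq_mul_inv_iff_mul_eq, doubleRep_apply, doubleRep_apply, j_flipAut, mirror_mirror]
    ext1
    simp [coe_blockDiag, swapGL, fromBlocks_multiply]
  have hν : flipAut * act 0 * act 2 ∈ H := mul_mem (mul_mem hflip (hact 0)) (hact 2)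
  have hr : act 1 * act 0 * act 2 ∈ H := mul_mem (mul_mem (hact 1) (hact 0)) (hact 2)
  have hσ := mul_mem hν hr
  set ν := flipAut * act 0 * act 2
  have ν0 : ν (of 0) = (of 0)⁻¹ := by simp [ν]
  have ν1 : ν (of 1) = of 1 := by simp [ν, mul_assoc]
  set σ := ν * (act 1 * act 0 * act 2)
  have σ0 : σ (of 0) = of 1 := by simp [σ, ν1]
  have σ1 : σ (of 1) = of 0 := by simp [σ, ν0, mul_assoc]
  refine mem_of_generators H hconj ⟨_, mul_mem (mul_mem hσ (inv_mem (hact 0))) hσ, ?_, ?_⟩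
    ⟨σ, hσ, σ0, σ1⟩ ⟨ν, hν, ν0, ν1⟩ φ
  · have : (act 0)⁻¹ (of 1) = of 1 * of 0 := by
      rw [MulAut.inv_apply, MulEquiv.symm_apply_eq]; simp
    simp [σ0, σ1, this]
  · have : (act 0)⁻¹ (of 0) = of 0 := by
      rw [MulAut.inv_apply, MulEquiv.symm_apply_eq]; simp
    simp [σ0, σ1, this]

lemma exists_transcendental : ∃ x : ℂ, x ≠ 0 ∧ Transcendental ℤ x := by
  have h := transcendental_liouvilleNumber (m := 2) le_rfl
  have ht : Transcendental ℤ (algebraMap ℝ ℂ (liouvilleNumber (2 : ℕ))) :=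
    (transcendental_algebraMap_iff (algebraMap ℝ ℂ).injective).mpr h
  refine ⟨_, fun h0 => ht ?_, ht⟩
  rw [h0]
  exact isAlgebraic_zero

/-- The product of a linear group with `ℂˣ` is linear, and the index type may be taken to be
`Fin n`. -/
lemma exists_hom_GL_fin (m : Type) [Fintype m] [DecidableEq m] :
    ∃ (n : ℕ) (_ : 0 < n) (f : GL m ℂ × ℂˣ →* GL (Fin n) ℂ), Function.Injective f := by
  let e := Units.mapEquiv
    (Matrix.reindexAlgEquiv ℂ ℂ (Fintype.equivFin (m ⊕ Unit))).toRingEquiv.toMulEquiv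
  refine ⟨Fintype.card (m ⊕ Unit), Fintype.card_pos,
    e.toMonoidHom.comp
      ((blockDiag m Unit).comp ((MonoidHom.id _).prodMap
        (Units.map (Matrix.scalar Unit : ℂ →+* _).toMonoidHom))), ?_⟩
  refine e.injective.comp ((blockDiag_injective _ _).comp ?_)
  refine Function.Injective.prodMap Function.injective_id (Units.map_injective ?_)
  exact fun _ _ => Matrix.scalar_inj.mp

end Linear

end MappingTorus

/-- For every automorphism `φ` of the free group `F₂`, the mapping torus
`F₂ ⋊_φ ℤ` (the ascending HNN extension `HNN_φ(F₂)`, where the generator of `ℤ`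
acts on `F₂` by `φ`) is linear: it embeds into `GL_n(ℂ)` for some `n > 0`. -/
theorem mappingTorus_of_freeGroup_automorphism_linear
    (φ : MulAut (FreeGroup (Fin 2))) :
    ∃ (n : ℕ) (_ : 0 < n)
      (ψ : SemidirectProduct (FreeGroup (Fin 2)) (Multiplicative ℤ)
          (zpowersHom (MulAut (FreeGroup (Fin 2))) φ) →*
        Matrix.GeneralLinearGroup (Fin n) ℂ),
      Function.Injective ψ := by
  obtain ⟨x, hx, ht⟩ := MappingTorus.exists_transcendental
  obtain ⟨T, hT⟩ := MappingTorus.exists_intertwiner hx φ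
  obtain ⟨n, hn, f, hf⟩ := MappingTorus.exists_hom_GL_fin (Fin 6 ⊕ Fin 6)
  let R := MappingTorus.doubleRep hx
  let u : ℂˣ := Units.mk0 2 two_ne_zero
  -- the factor `2 ^ k` keeps `F₂` and the stable letter apart
  let ψ : SemidirectProduct (FreeGroup (Fin 2)) (Multiplicative ℤ)
      (zpowersHom (MulAut (FreeGroup (Fin 2))) φ) →*
      Matrix.GeneralLinearGroup (Fin 6 ⊕ Fin 6) ℂ × ℂˣ :=
    SemidirectProduct.lift (R.prod 1) (zpowersHom _ (T, u)) fun k => by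
      ext w : 1
      have := zpow_mem hT k.toAdd (FreeGroup.of w)
      simpa [R, zpowersHom_apply] using this
  refine ⟨n, hn, f.comp ψ, hf.comp ?_⟩
  rw [injective_iff_map_eq_one]
  rintro ⟨w, k⟩ h
  have h1 : R w * T ^ k.toAdd = 1 ∧ u ^ k.toAdd = 1 := by
    simpa [ψ, SemidirectProduct.lift, zpowersHom_apply, Prod.ext_iff] using h
  have hk : k.toAdd = 0 := by
    have h2 : (2 : ℝ) ^ k.toAdd = 1 := by
      simpa [u] using congrArg (fun v : ℂˣ => ‖(v : ℂ)‖) h1.2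
    exact (zpow_eq_one_iff_right₀ (by norm_num) (by norm_num)).mp h2
  rw [hk, zpow_zero, mul_one] at h1
  have hw : w = 1 := MappingTorus.doubleRep_injective hx ht (h1.1.trans (map_one R).symm)
  exact SemidirectProduct.ext hw (Multiplicative.toAdd.injective hk)
end

section
/- For every integer n ≥ 1 and every injective group endomorphism φ of the free group Fₙ on generators x₁, …, xₙ, the ascending HNN extension HNN_φ(Fₙ), given by the presentation ⟨x₁, …, xₙ, t ∣ t xᵢ t⁻¹ = φ(xᵢ) for i = 1, …, n⟩, is residually finite. -/
/-!
Every element of the ascending HNN extension can be written `t⁻ᵃ w tᵇ` with `a, b : ℕ` and `w` in the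
free group. If `a ≠ b`, the exponent sum of `t`, taken modulo a large integer, separates it from `1`.
If `a = b`, it is conjugate to `w ≠ 1`, and it suffices to find a finite group `H`, a homomorphism
`ψ : Fₙ → H` with `ψ w ≠ 1` and an element `u : H` such that `u ψ(x) u⁻¹ = ψ (φ x)` for all `x`.

Following Borisov and Sapir, `H` is `PGL₂(F) ⋊ Aut (PGL₂(F))` for a finite field `F`, and `u` is a
power of Frobenius. A homomorphism `Fₙ → PGL₂(F)` is a tuple `B` of invertible matrices. Evaluating
the words `φ(xᵢ)` at matrices, with adjugates in place of inverses, is a polynomial map `Φ` on tuples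
(`endoMap`), and `u` exists as soon as `Φ B` is `B` with all entries raised to the power `p ^ s`.
Such quasi-fixed points of a polynomial map are produced by `exists_quasi_fixed`, outside the zero
locus of any polynomial `D` that does not vanish identically on the image of `Φ^[N]`, where `N` is the
dimension. Here `D` is the product of the determinants and of an off-diagonal entry of the value
of `w`; it is nonzero somewhere on that image because `w` at `Φ^[N] A` represents the same element of
`PGL₂` as `φ^[N] w ≠ 1` at `A`, and there are matrices `A` at which no nontrivial word is scalar
(`exists_generic`, by deforming rank-one matrices).

For `exists_quasi_fixed`, let `f` be the polynomial map over `𝔽_p`, let `E` be the substitution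
`X i ↦ f i`, let `Q = p ^ s` be large, and let `I` be the ideal generated by the `X i ^ Q - f i`.
In the quotient `A` by `I`, `E` is the `Q`-power Frobenius. The `N + 1` polynomials `E^[j] (X i)`,
`j ≤ N`, satisfy an algebraic relation independent of `s`; in `A` it becomes an equation in `X i`
alone, of degree at most `K = p ^ e * Q ^ N`. Hence for some `T` all `K`-th powers `z` in `A` satisfy
`z ^ p ^ T = z`, so `A` is finite and `K` bounds the exponents of nilpotency. If `D` were nilpotent in
`A`, then `D ^ K = (E^[N] D) ^ p ^ e` would vanish in `A`; but `I` contains no nonzero polynomial of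
degree less than `Q` (`eq_zero_of_mem_span`, by confluence of the rewriting `X i ^ Q ↦ f i`). So `D`
is nonzero in the residue field of some prime of `A`, and that point is the one sought.
-/


/-- The relators `t xᵢ t⁻¹ φ(xᵢ)⁻¹` (for `i = 1, …, n`) of the ascending HNN
extension `HNN_φ(Fₙ) = ⟨x₁, …, xₙ, t ∣ t xᵢ t⁻¹ = φ(xᵢ)⟩`, written in the free
group on the generators `x₁, …, xₙ` (the `Sum.inl` part) and `t` (the `Sum.inr`
part). -/
def HNNRels (n : ℕ) (φ : FreeGroup (Fin n) →* FreeGroup (Fin n)) :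
    Set (FreeGroup (Fin n ⊕ Unit)) :=
  {r | ∃ i : Fin n,
    r = FreeGroup.of (Sum.inr ()) * FreeGroup.of (Sum.inl i) *
        (FreeGroup.of (Sum.inr ()))⁻¹ *
        (FreeGroup.map Sum.inl (φ (FreeGroup.of i)))⁻¹}

/-- A group `G` is residually finite if for every `g ≠ 1` in `G` there is a
homomorphism from `G` to some finite group sending `g` to a nontrivial element. -/
def ResiduallyFinite (G : Type*) [Group G] : Prop :=
  ∀ g : G, g ≠ 1 → ∃ (H : Type) (_ : Group H) (_ : Finite H) (ψ : G →* H), ψ g ≠ 1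

namespace BorisovSapir

open MvPolynomial

/-! ### Low-degree elements of the ideal generated by the `X i ^ Q - f i` -/

section NormalForm
variable {σ k : Type*} [Field k]

lemma mem_of_monomials (P : Submodule k (MvPolynomial σ k)) (d : ℕ)
    (hP : ∀ m : σ →₀ ℕ, m.degree < d → monomial m (1 : k) ∈ P)
    (v : MvPolynomial σ k) (hv : v.totalDegree < d) : v ∈ P := by
  rw [← v.support_sum_monomial_coeff]
  refine P.sum_mem fun m hm => ?_
  rw [← mul_one (coeff m v), ← smul_eq_mul, ← smul_monomial]
  refine P.smul_mem _ (hP m (lt_of_le_of_lt ?_ hv))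
  have := le_totalDegree hm
  simpa [Finsupp.degree_apply, Finsupp.sum] using this

open Classical in
/-- One rewriting step for the system `X i ^ Q ↦ f i`, extended linearly: a monomial divisible by
some `X i ^ Q` has one such factor (for a chosen `i`) replaced by `f i`, and all other monomials are
fixed. -/
noncomputable def rewriteStep (f : σ → MvPolynomial σ k) (Q : ℕ) :
    MvPolynomial σ k →ₗ[k] MvPolynomial σ k :=
  (basisMonomials σ k).constr k fun m =>
    if h : ∃ i, Q ≤ m i then f h.choose * monomial (m - Finsupp.single h.choose Q) 1
    else monomial m 1

/-- The polynomials rewritten to `0` after finitely many steps. -/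
noncomputable def rewriteKer (f : σ → MvPolynomial σ k) (Q : ℕ) :
    Submodule k (MvPolynomial σ k) where
  carrier := {u | ∃ n : ℕ, (rewriteStep f Q ^ n) u = 0}
  zero_mem' := ⟨0, by simp⟩
  add_mem' := by
    rintro a b ⟨n, hn⟩ ⟨m, hm⟩
    refine ⟨n + m, ?_⟩
    have h1 : (rewriteStep f Q ^ (n + m)) a = 0 := by
      rw [add_comm n m, pow_add, Module.End.mul_apply, hn, map_zero]
    have h2 : (rewriteStep f Q ^ (n + m)) b = 0 := by
      rw [pow_add, Module.End.mul_apply, hm, map_zero]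
    rw [map_add, h1, h2, add_zero]
  smul_mem' := by
    rintro c a ⟨n, hn⟩
    exact ⟨n, by rw [map_smul, hn, smul_zero]⟩

variable {f : σ → MvPolynomial σ k} {Q : ℕ}

lemma mem_rewriteKer_of_step {u : MvPolynomial σ k} (h : rewriteStep f Q u ∈ rewriteKer f Q) :
    u ∈ rewriteKer f Q := by
  obtain ⟨n, hn⟩ := h
  exact ⟨n + 1, by rw [pow_succ, Module.End.mul_apply, hn]⟩

lemma rewriteStep_irreducible (m : σ →₀ ℕ) (h : ∀ i, m i < Q) :
    rewriteStep f Q (monomial m 1) = monomial m 1 := by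
  have : rewriteStep f Q (basisMonomials σ k m) = _ := Module.Basis.constr_basis _ _ _ _
  rw [coe_basisMonomials] at this
  rw [this, dif_neg]
  push Not
  exact h

lemma rewriteStep_reducible (m : σ →₀ ℕ) (h : ∃ i, Q ≤ m i) :
    ∃ (i : σ) (m' : σ →₀ ℕ), m = Finsupp.single i Q + m' ∧
      rewriteStep f Q (monomial m 1) = f i * monomial m' 1 := by
  have : rewriteStep f Q (basisMonomials σ k m) = _ := Module.Basis.constr_basis _ _ _ _
  rw [coe_basisMonomials] at this
  refine ⟨h.choose, m - Finsupp.single h.choose Q, ?_, ?_⟩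
  · rw [add_tsub_cancel_of_le]
    simpa using h.choose_spec
  · rw [this, dif_pos h]

lemma totalDegree_mul_monomial_lt (hQ : ∀ i, (f i).totalDegree < Q) (i : σ) (m : σ →₀ ℕ) :
    (f i * monomial m (1 : k)).totalDegree < Q + m.degree := by
  refine lt_of_le_of_lt (totalDegree_mul _ _) ?_
  rw [totalDegree_monomial _ one_ne_zero]
  have := hQ i
  simp only [Finsupp.degree_apply, Finsupp.sum] at *
  omega

/-- A single rewriting step changes a polynomial by something that rewrites to `0`. The induction
on the degree works because rewriting strictly lowers the degree of a reducible monomial. -/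
lemma sub_rewriteStep_mem (hQ : ∀ i, (f i).totalDegree < Q) (u : MvPolynomial σ k) :
    u - rewriteStep f Q u ∈ rewriteKer f Q := by
  set P := (rewriteKer f Q).comap (LinearMap.id - rewriteStep f Q) with hPdef
  have key : ∀ d : ℕ, ∀ m : σ →₀ ℕ, m.degree < d → monomial m (1 : k) ∈ P := by
    intro d
    induction d with
    | zero => intro m hm; omega
    | succ d ih =>
      intro m hm
      simp only [hPdef, Submodule.mem_comap, LinearMap.sub_apply, LinearMap.id_apply]
      by_cases h : ∃ i, Q ≤ m i
      · obtain ⟨i, m', hm', hstep⟩ := rewriteStep_reducible (f := f) m h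
        have hlt := totalDegree_mul_monomial_lt hQ i m'
        have hdeg : m.degree = Q + m'.degree := by rw [hm', map_add, Finsupp.degree_single]
        have := mem_of_monomials P d ih (f i * monomial m' 1) (by omega)
        apply mem_rewriteKer_of_step
        rw [map_sub, hstep]
        simpa [hPdef] using this
      · push Not at h
        rw [rewriteStep_irreducible m h, sub_self]
        exact Submodule.zero_mem _
  exact mem_of_monomials P _ (key (u.totalDegree + 1)) u (Nat.lt_succ_self _)

/-- Multiples of the relators rewrite to `0`. On a monomial, the rewriting step may choose an index
`j ≠ i`; the resulting critical pair `X i ^ Q * X j ^ Q` resolves by induction on the degree. -/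
lemma mul_mem_rewriteKer (hQ : ∀ i, (f i).totalDegree < Q) (i : σ) (u : MvPolynomial σ k) :
    (X i ^ Q - f i) * u ∈ rewriteKer f Q := by
  set P : Submodule k (MvPolynomial σ k) :=
    ⨅ i, (rewriteKer f Q).comap (LinearMap.mulLeft k (X i ^ Q - f i)) with hPdef
  have hP : ∀ v, v ∈ P ↔ ∀ i, (X i ^ Q - f i) * v ∈ rewriteKer f Q := by
    intro v; simp [hPdef]
  have key : ∀ d : ℕ, ∀ m : σ →₀ ℕ, m.degree < d → monomial m (1 : k) ∈ P := by
    intro d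
    induction d with
    | zero => intro m hm; omega
    | succ d ih =>
      intro m hm
      rw [hP]
      intro i
      have hX : ∀ (i : σ) (m : σ →₀ ℕ),
          X i ^ Q * monomial m (1 : k) = monomial (Finsupp.single i Q + m) 1 := by
        intro i m
        rw [X_pow_eq_monomial, monomial_mul, one_mul]
      obtain ⟨j, m', hm', hstep⟩ := rewriteStep_reducible (f := f) (Q := Q)
        (Finsupp.single i Q + m) ⟨i, by rw [Finsupp.add_apply, Finsupp.single_eq_same]; omega⟩
      have h1 := sub_rewriteStep_mem hQ (monomial (Finsupp.single i Q + m) (1 : k))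
      rw [hstep] at h1
      rw [sub_mul, hX]
      suffices h2 : f j * monomial m' 1 - f i * monomial m 1 ∈ rewriteKer f Q by
        have := Submodule.add_mem _ h1 h2
        simpa using this
      by_cases hij : j = i
      · subst hij
        rw [add_right_inj] at hm'
        subst hm'
        simp
      · have hle : Finsupp.single j Q ≤ m := by
          have := DFunLike.congr_fun hm' j
          simp [Ne.symm hij] at this
          simp [this]
        obtain ⟨m'', rfl⟩ := exists_add_of_le hle
        have hm2 : m' = Finsupp.single i Q + m'' := by
          rw [add_left_comm, add_right_inj] at hm'
          exact hm'.symm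
        subst hm2
        have hdeg : (Finsupp.single j Q + m'').degree = Q + m''.degree := by
          rw [map_add, Finsupp.degree_single]
        rw [hdeg] at hm
        have hi := (hP _).1 (mem_of_monomials P d ih (f j * monomial m'' 1)
          (by have := totalDegree_mul_monomial_lt hQ j m''; omega)) i
        have hj := (hP _).1 (mem_of_monomials P d ih (f i * monomial m'' 1)
          (by have := totalDegree_mul_monomial_lt hQ i m''; omega)) j
        have := Submodule.sub_mem _ hi hj
        rw [← hX, ← hX]
        convert this using 1
        ring
  exact (hP u).1 (mem_of_monomials P _ (key (u.totalDegree + 1)) u (Nat.lt_succ_self _)) i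

/-- The ideal generated by the `X i ^ Q - f i`, with `deg (f i) < Q`, contains no nonzero polynomial
of degree less than `Q`: such a polynomial is fixed by rewriting, and every element of the ideal
rewrites to `0`. -/
lemma eq_zero_of_mem_span [Fintype σ] (hQ : ∀ i, (f i).totalDegree < Q) (g : MvPolynomial σ k)
    (hg : g.totalDegree < Q)
    (hmem : g ∈ Ideal.span (Set.range fun i => X i ^ Q - f i)) : g = 0 := by
  have h1 : g ∈ rewriteKer f Q := by
    obtain ⟨c, rfl⟩ := Ideal.mem_span_range_iff_exists_fun.1 hmem
    refine Submodule.sum_mem _ fun i _ => ?_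
    rw [mul_comm]
    exact mul_mem_rewriteKer hQ i _
  have hfix : g ∈ LinearMap.eqLocus (rewriteStep f Q) LinearMap.id := by
    refine mem_of_monomials _ Q (fun m hm => ?_) g hg
    exact rewriteStep_irreducible m fun i => lt_of_le_of_lt (Finsupp.le_degree i m) hm
  obtain ⟨n, hn⟩ := h1
  have : ∀ n : ℕ, (rewriteStep f Q ^ n) g = g := by
    intro n
    induction n with
    | zero => simp
    | succ n ih => rw [pow_succ, Module.End.mul_apply, show rewriteStep f Q g = g from hfix, ih]
  rw [← this n, hn]

end NormalForm

/-! ### Quasi-fixed points of polynomial maps over finite fields -/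

section QuasiFixed

/-- The Kronecker substitution `X j ↦ X ^ (Q ^ j)` is injective on polynomials of degree less than
`Q`, because base-`Q` expansions are unique. -/
lemma kronecker_ne_zero {k : Type*} [Field k] {n Q : ℕ} (h : MvPolynomial (Fin n) k)
    (h0 : h ≠ 0) (hdeg : h.totalDegree < Q) :
    aeval (fun j : Fin n => (Polynomial.X : Polynomial k) ^ (Q ^ (j : ℕ))) h ≠ 0 := by
  have hlt : ∀ m ∈ h.support, ∀ j, m j < Q := fun m hm j =>
    lt_of_le_of_lt ((Finsupp.le_degree j m).trans
      (by simpa [Finsupp.degree_apply, Finsupp.sum] using le_totalDegree hm)) hdeg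
  obtain ⟨m₀, hm₀⟩ := ne_zero_iff.1 h0
  have hm₀' : m₀ ∈ h.support := mem_support_iff.2 hm₀
  intro hz
  apply hm₀
  have hc := congrArg (fun P => Polynomial.coeff P (∑ j : Fin n, m₀ j * Q ^ (j : ℕ))) hz
  simp only [Polynomial.coeff_zero, aeval_def, eval₂_eq'] at hc
  rw [← hc, Polynomial.finsetSum_coeff]
  have hterm : ∀ m : Fin n →₀ ℕ, (algebraMap k (Polynomial k) (coeff m h) *
      ∏ j : Fin n, ((Polynomial.X : Polynomial k) ^ (Q ^ (j : ℕ))) ^ m j) =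
      Polynomial.C (coeff m h) * Polynomial.X ^ (∑ j : Fin n, m j * Q ^ (j : ℕ)) := by
    intro m
    rw [← Finset.prod_pow_eq_pow_sum]
    congr 1
    refine Finset.prod_congr rfl fun j _ => ?_
    rw [← pow_mul, mul_comm]
  rw [Finset.sum_eq_single m₀]
  · rw [hterm]; simp
  · intro m hm hne
    rw [hterm, Polynomial.coeff_C_mul_X_pow, if_neg]
    intro heq
    apply hne
    have := @finFunctionFinEquiv_apply Q n (fun j => ⟨m j, hlt m hm j⟩)
    have h' := @finFunctionFinEquiv_apply Q n (fun j => ⟨m₀ j, hlt m₀ hm₀' j⟩)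
    have hE := finFunctionFinEquiv.injective (Fin.ext (this.trans (heq.symm.trans h'.symm)))
    ext j
    simpa using congrArg Fin.val (congrFun hE j)
  · intro hn; exact absurd hm₀' hn

lemma natDegree_kronecker_le {k : Type*} [Field k] {N Q : ℕ} (hQ : 0 < Q)
    (h : MvPolynomial (Fin (N + 1)) k) :
    (aeval (fun j : Fin (N + 1) => (Polynomial.X : Polynomial k) ^ (Q ^ (j : ℕ))) h).natDegree
      ≤ h.totalDegree * Q ^ N := by
  rw [aeval_def, eval₂_eq']
  refine Polynomial.natDegree_sum_le_of_forall_le _ _ fun m hm => ?_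
  refine (Polynomial.natDegree_C_mul_le _ _).trans ?_
  refine (Polynomial.natDegree_prod_le _ _).trans ?_
  have : ∑ j, m j ≤ h.totalDegree := by
    simpa [Finsupp.sum_fintype] using le_totalDegree hm
  refine le_trans ?_ (Nat.mul_le_mul_right _ this)
  rw [Finset.sum_mul]
  refine Finset.sum_le_sum fun j _ => ?_
  refine Polynomial.natDegree_pow_le.trans (Nat.mul_le_mul_left _ ?_)
  rw [Polynomial.natDegree_X_pow]
  exact Nat.pow_le_pow_right hQ (by omega)

variable (p : ℕ) [hp : Fact p.Prime]

/-- A nonzero polynomial over `𝔽_p` divides a power of `X ^ p ^ M - X`, where `p ^ M` is the size of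
its splitting field. The exponent `K` needs only to bound its degree, hence the multiplicities of
its roots. -/
lemma exists_dvd_pow (P : Polynomial (ZMod p)) (hP : P ≠ 0) (K : ℕ) (hK : P.natDegree ≤ K) :
    ∃ M, 0 < M ∧ P ∣ (Polynomial.X ^ (p ^ M) - Polynomial.X) ^ K := by
  let L := P.SplittingField
  have : Finite L := Module.finite_of_finite (ZMod p)
  have := Fintype.ofFinite L
  have : CharP L p := charP_of_injective_algebraMap (algebraMap (ZMod p) L).injective p
  obtain ⟨M, -, hM⟩ := FiniteField.card L p
  refine ⟨M, M.pos, ?_⟩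
  rw [← Polynomial.map_dvd_map' (algebraMap (ZMod p) L)]
  have hs := (Polynomial.SplittingField.splits P).eq_prod_roots
  rw [hs]
  have hcard : (P.map (algebraMap (ZMod p) L)).roots.card ≤ K :=
    (Polynomial.card_roots' _).trans ((Polynomial.natDegree_map_le).trans hK)
  have hunit : IsUnit (Polynomial.C (P.map (algebraMap (ZMod p) L)).leadingCoeff) := by
    rw [Polynomial.isUnit_C, isUnit_iff_ne_zero, Polynomial.leadingCoeff_ne_zero]
    exact (Polynomial.map_ne_zero_iff (algebraMap (ZMod p) L).injective).2 hP
  rw [hunit.mul_left_dvd]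
  simp only [Polynomial.map_pow, Polynomial.map_sub, Polynomial.map_X]
  refine dvd_trans ?_ (pow_dvd_pow _ hcard)
  generalize (P.map (algebraMap (ZMod p) L)).roots = S
  induction S using Multiset.induction with
  | empty => simp
  | cons a S ih =>
    rw [Multiset.map_cons, Multiset.prod_cons, Multiset.card_cons, pow_succ']
    refine mul_dvd_mul ?_ ih
    rw [Polynomial.dvd_iff_isRoot]
    simp only [Polynomial.IsRoot, Polynomial.eval_sub, Polynomial.eval_pow, Polynomial.eval_X]
    rw [← hM, FiniteField.pow_card, sub_self]

lemma pow_pow_mul_eq {A : Type*} [Monoid A] {w : A} {q M : ℕ} (h : w ^ q ^ M = w) (r : ℕ) :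
    w ^ q ^ (M * r) = w := by
  induction r with
  | zero => simp
  | succ r ih => rw [Nat.mul_succ, pow_add, pow_mul, ih, h]

/-- If `D` does not vanish identically on the image of the `N`-th iterate of the polynomial self-map `f` of
affine `N`-space over `𝔽_p`, then there is a point `a` over a finite field with
`f a = a ^ p ^ s` coordinatewise and `D a ≠ 0`. -/
theorem exists_quasi_fixed {σ : Type} [Fintype σ] (f : σ → MvPolynomial σ (ZMod p))
    (D : MvPolynomial σ (ZMod p)) (hD : (bind₁ f)^[Fintype.card σ] D ≠ 0) :
    ∃ (F : Type) (_ : Field F) (_ : Finite F) (_ : Algebra (ZMod p) F) (s : ℕ) (a : σ → F),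
      (∀ i, aeval a (f i) = a i ^ p ^ s) ∧ aeval a D ≠ 0 := by
  set N := Fintype.card σ with hN
  set E := bind₁ f with hE
  -- The `N + 1` iterates of a coordinate are algebraically dependent, as the transcendence degree
  -- is `N`.
  have hdep : ∀ i : σ, ∃ h : MvPolynomial (Fin (N + 1)) (ZMod p),
      aeval (fun j : Fin (N + 1) => E^[j] (X i)) h = 0 ∧ h ≠ 0 := by
    intro i
    by_contra! hcon
    have hind : AlgebraicIndependent (ZMod p) (fun j : Fin (N + 1) => E^[j] (X i)) :=
      algebraicIndependent_iff.2 hcon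
    have := hind.lift_cardinalMk_le_trdeg
    rw [MvPolynomial.trdeg_of_isDomain] at this
    simp [← hN] at this
  choose h h_rel h_ne using hdep
  have hp1 : 1 < p := hp.out.one_lt
  obtain ⟨e, he⟩ : ∃ e, ∀ i, (h i).totalDegree ≤ p ^ e :=
    ⟨Finset.univ.sup fun i => (h i).totalDegree, fun i =>
      (Finset.le_sup (f := fun i => (h i).totalDegree) (Finset.mem_univ i)).trans
        (Nat.lt_pow_self hp1).le⟩
  set g := (E^[N] D) ^ p ^ e with hg
  have hg0 : g ≠ 0 := pow_ne_zero _ hD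
  obtain ⟨s, hs_h, hs_f, hs_g⟩ : ∃ s, (∀ i, (h i).totalDegree < p ^ s) ∧
      (∀ i, (f i).totalDegree < p ^ s) ∧ g.totalDegree < p ^ s := by
    set s := (Finset.univ.sup fun i => (h i).totalDegree) +
      (Finset.univ.sup fun i => (f i).totalDegree) + g.totalDegree
    have hs : s < p ^ s := Nat.lt_pow_self hp1
    refine ⟨s, fun i => ?_, fun i => ?_, by omega⟩
    · have := Finset.le_sup (f := fun i => (h i).totalDegree) (Finset.mem_univ i)
      omega
    · have := Finset.le_sup (f := fun i => (f i).totalDegree) (Finset.mem_univ i)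
      omega
  set Q := p ^ s with hQ
  have hQ0 : 0 < Q := pow_pos hp.out.pos _
  set I : Ideal (MvPolynomial σ (ZMod p)) := Ideal.span (Set.range fun i => X i ^ Q - f i) with hI
  let A := MvPolynomial σ (ZMod p) ⧸ I
  let q : MvPolynomial σ (ZMod p) →ₐ[ZMod p] A := Ideal.Quotient.mkₐ (ZMod p) I
  have hker : ∀ z, q z = 0 ↔ z ∈ I := fun z => Ideal.Quotient.eq_zero_iff_mem
  have hqs : Function.Surjective q := Ideal.Quotient.mkₐ_surjective _ _
  have : Nontrivial A := by
    apply Ideal.Quotient.nontrivial_iff.2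
    intro htop
    have h1 : (1 : MvPolynomial σ (ZMod p)) ∈ I := htop ▸ Submodule.mem_top
    exact one_ne_zero (eq_zero_of_mem_span hs_f 1 (by simpa using hQ0) h1)
  have : CharP A p := charP_of_injective_algebraMap (algebraMap (ZMod p) A).injective p
  have hX : ∀ i, q (f i) = q (X i) ^ Q := by
    intro i
    rw [← map_pow, eq_comm, ← sub_eq_zero, ← map_sub, hker]
    exact Ideal.subset_span ⟨i, rfl⟩
  -- Modulo `I`, the endomorphism `E` is the `Q`-power Frobenius.
  have hfrob : ∀ z, q (E z) = q z ^ Q := by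
    intro z
    induction z using MvPolynomial.induction_on with
    | C a =>
      rw [hE, bind₁_C_right, ← map_pow, ← map_pow, hQ, ZMod.pow_card_pow]
    | add x y hx hy => rw [map_add, map_add, map_add, hx, hy, hQ, add_pow_char_pow]
    | mul_X x i hx => rw [map_mul, map_mul, map_mul, hx, mul_pow, hE, bind₁_X_right, hX]
  have hiter : ∀ (j : ℕ) z, q (E^[j] z) = q z ^ Q ^ j := by
    intro j
    induction j with
    | zero => simp
    | succ j ih =>
      intro z
      rw [Function.iterate_succ_apply', hfrob, ih, ← pow_mul, pow_succ]
  -- The exponent `K` bounds nilpotency in `A` and does not depend on `T` below; substituting the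
  -- `Q`-power Frobenius in the dependence relation gives an equation of degree at most `K` for each
  -- coordinate.
  set K := p ^ (e + s * N) with hK
  have hKQ : K = p ^ e * Q ^ N := by rw [hK, hQ, pow_add, pow_mul]
  have hM : ∀ i, ∃ M, 0 < M ∧ (q (X i) ^ K) ^ p ^ M = q (X i) ^ K := by
    intro i
    set P := aeval (fun j : Fin (N + 1) => (Polynomial.X : Polynomial (ZMod p)) ^ (Q ^ (j : ℕ)))
      (h i) with hP
    obtain ⟨M, hM0, c, hc⟩ := exists_dvd_pow p P (kronecker_ne_zero _ (h_ne i) (hs_h i)) K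
      ((natDegree_kronecker_le hQ0 _).trans (hKQ ▸ Nat.mul_le_mul_right _ (he i)))
    refine ⟨M, hM0, ?_⟩
    have hPz : Polynomial.aeval (q (X i)) P = 0 := by
      rw [hP, comp_aeval_apply]
      have := congrArg q (h_rel i)
      rw [comp_aeval_apply, map_zero] at this
      rw [← this]
      congr 2
      ext j
      simp [hiter]
    have := congrArg (Polynomial.aeval (q (X i))) hc
    rw [map_mul, hPz, zero_mul, map_pow, map_sub, map_pow, Polynomial.aeval_X, hK,
      sub_pow_char_pow, sub_eq_zero, ← hK] at this
    rw [pow_right_comm, this]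
  choose M hM0 hM using hM
  obtain ⟨T, hT0, hT⟩ : ∃ T, 0 < T ∧ ∀ i, (q (X i) ^ K) ^ p ^ T = q (X i) ^ K := by
    refine ⟨∏ i, M i, Finset.prod_pos fun i _ => hM0 i, fun i => ?_⟩
    obtain ⟨r, hr⟩ := Finset.dvd_prod_of_mem M (Finset.mem_univ i)
    rw [hr]
    exact pow_pow_mul_eq (hM i) r
  have hall : ∀ z : A, (z ^ K) ^ p ^ T = z ^ K := by
    intro z
    obtain ⟨z, rfl⟩ := hqs z
    induction z using MvPolynomial.induction_on with
    | C a =>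
      simp only [← map_pow]
      rw [ZMod.pow_card_pow]
    | add x y hx hy =>
      rw [map_add, hK, add_pow_char_pow, ← hK, add_pow_char_pow, hx, hy]
    | mul_X x i hx => rw [map_mul, mul_pow, mul_pow, hx, hT]
  -- If `q D` were nilpotent then `q D ^ K = 0`, that is, `g = (E^[N] D) ^ p ^ e` would lie in `I`,
  -- against `deg g < Q`.
  have hnil : ¬ IsNilpotent (q D) := by
    rintro ⟨r, hr⟩
    have h0 : q D ^ K = 0 := by
      rw [← pow_pow_mul_eq (hall (q D)) r, pow_right_comm]
      have : r ≤ p ^ (T * r) :=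
        (Nat.le_mul_of_pos_left r hT0).trans (Nat.lt_pow_self hp1).le
      rw [pow_eq_zero_of_le this hr, zero_pow (pow_pos hp.out.pos _).ne']
    have hgI : g ∈ I := by
      rw [← hker, hg, map_pow, hiter, ← pow_mul, mul_comm, ← hKQ, h0]
    exact hg0 (eq_zero_of_mem_span hs_f g hs_g hgI)
  have : Algebra.IsIntegral (ZMod p) A := by
    refine ⟨fun z => ⟨Polynomial.X ^ (K * p ^ T) - Polynomial.X ^ K, ?_, ?_⟩⟩
    · apply Polynomial.monic_X_pow_sub
      rw [Polynomial.degree_X_pow]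
      norm_cast
      exact lt_mul_of_one_lt_right (pow_pos hp.out.pos _) (Nat.one_lt_pow hT0.ne' hp1)
    · simp [pow_mul, hall]
  have : Module.Finite (ZMod p) A := Algebra.IsIntegral.finite
  have : Finite A := Module.finite_of_finite (ZMod p)
  -- A prime ideal of `A` avoiding `q D` has a finite residue field, which contains the point sought.
  rw [nilpotent_iff_mem_prime] at hnil
  push Not at hnil
  obtain ⟨J, hJ, hDJ⟩ := hnil
  have hJm : J.IsMaximal := IsArtinianRing.isMaximal_of_isPrime J
  have : Finite (A ⧸ J) := Quotient.finite _
  let π := Ideal.Quotient.mkₐ (ZMod p) J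
  have hπ : ∀ z, aeval (fun i => π (q (X i))) z = π (q z) := by
    intro z
    have : aeval (fun i => π (q (X i))) = π.comp q := by
      ext i; simp
    rw [this]; rfl
  refine ⟨A ⧸ J, Ideal.Quotient.field J, inferInstance, inferInstance, s,
    fun i => π (q (X i)), fun i => ?_, ?_⟩
  · rw [hπ, hX, map_pow]
  · rw [hπ]
    exact fun h0 => hDJ (Ideal.Quotient.eq_zero_iff_mem.1 h0)

end QuasiFixed

/-! ### Words in `2 × 2` matrices and `PGL₂` -/

section Words

open Matrix
open scoped MatrixGroups

variable {ι : Type*} {R S : Type*} [CommRing R] [CommRing S]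

/-- The value of a signed letter at a family of `2 × 2` matrices. Inverse letters are sent to
adjugates rather than inverses, so that the value is polynomial in the matrix entries; in `PGL₂`
the two agree. -/
def letterEval (A : ι → Matrix (Fin 2) (Fin 2) R) (l : ι × Bool) : Matrix (Fin 2) (Fin 2) R :=
  if l.2 then A l.1 else (A l.1).adjugate

/-- The value of a word at a family of `2 × 2` matrices, with adjugates in place of inverses. -/
def wordEval (A : ι → Matrix (Fin 2) (Fin 2) R) (L : List (ι × Bool)) :
    Matrix (Fin 2) (Fin 2) R :=
  (L.map (letterEval A)).prod

/-- The polynomial self-map of families of `2 × 2` matrices induced by an endomorphism `φ` of the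
free group: the `i`-th matrix is replaced by the value of the reduced word of `φ(xᵢ)`. -/
def endoMap [DecidableEq ι] (φ : FreeGroup ι →* FreeGroup ι)
    (A : ι → Matrix (Fin 2) (Fin 2) R) (i : ι) :
    Matrix (Fin 2) (Fin 2) R :=
  wordEval A (φ (FreeGroup.of i)).toWord

lemma map_letterEval (f : R →+* S) (A : ι → Matrix (Fin 2) (Fin 2) R) (l : ι × Bool) :
    f.mapMatrix (letterEval A l) = letterEval (fun i => f.mapMatrix (A i)) l := by
  unfold letterEval
  split_ifs
  · rfl
  · exact f.map_adjugate _

lemma map_wordEval (f : R →+* S) (A : ι → Matrix (Fin 2) (Fin 2) R) (L : List (ι × Bool)) :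
    f.mapMatrix (wordEval A L) = wordEval (fun i => f.mapMatrix (A i)) L := by
  unfold wordEval
  rw [map_list_prod, List.map_map]
  congr 2
  funext l
  exact map_letterEval f A l

variable {K : Type*} [Field K]

/-- The matrix `M` is invertible and represents the element `x` of `PGL₂(K)`. -/
def Represents (M : Matrix (Fin 2) (Fin 2) K) (x : PGL(2, K)) : Prop :=
  ∃ g : GL (Fin 2) K, (g : Matrix (Fin 2) (Fin 2) K) = M ∧ ProjGenLinGroup.mk g = x

namespace Represents

variable {M M' : Matrix (Fin 2) (Fin 2) K} {x y : PGL(2, K)}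

lemma one : Represents (1 : Matrix (Fin 2) (Fin 2) K) 1 := ⟨1, rfl, map_one _⟩

lemma mul (h : Represents M x) (h' : Represents M' y) : Represents (M * M') (x * y) := by
  obtain ⟨g, rfl, rfl⟩ := h
  obtain ⟨g', rfl, rfl⟩ := h'
  exact ⟨g * g', rfl, map_mul _ _ _⟩

lemma unique (h : Represents M x) (h' : Represents M y) : x = y := by
  obtain ⟨g, rfl, rfl⟩ := h
  obtain ⟨g', h1, rfl⟩ := h'
  rw [Units.ext h1]

lemma det_ne_zero (h : Represents M x) : M.det ≠ 0 := by
  obtain ⟨g, rfl, rfl⟩ := h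
  exact g.det_ne_zero

/-- Representatives of one element of `PGL₂(K)` are proportional. -/
lemma exists_smul (h : Represents M x) (h' : Represents M' x) : ∃ c : K, c ≠ 0 ∧ M' = c • M := by
  obtain ⟨g, rfl, rfl⟩ := h
  obtain ⟨g', rfl, h2⟩ := h'
  obtain ⟨u, hu⟩ := ProjGenLinGroup.mk_eq_mk_iff.1 h2.symm
  refine ⟨u, u.ne_zero, ?_⟩
  rw [← hu]
  ext i j
  simp [mul_comm]

lemma adjugate (h : Represents M x) : Represents M.adjugate x⁻¹ := by
  obtain ⟨g, rfl, rfl⟩ := h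
  refine ⟨g⁻¹ * GeneralLinearGroup.scalar (Fin 2) (GeneralLinearGroup.det g), ?_, ?_⟩
  · have : ((g⁻¹ : GL (Fin 2) K) : Matrix (Fin 2) (Fin 2) K) = (g : Matrix (Fin 2) (Fin 2) K)⁻¹ :=
      coe_units_inv g
    rw [Units.val_mul, this, Matrix.inv_def]
    have hd : (g : Matrix (Fin 2) (Fin 2) K).det ≠ 0 := g.det_ne_zero
    ext i j
    simp
    field_simp
  · simp

end Represents

lemma represents_wordEval {A : ι → Matrix (Fin 2) (Fin 2) K} {ρ : FreeGroup ι →* PGL(2, K)}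
    (h : ∀ i, Represents (A i) (ρ (FreeGroup.of i))) (L : List (ι × Bool)) :
    Represents (wordEval A L) (ρ (FreeGroup.mk L)) := by
  induction L with
  | nil => simpa [wordEval, ← FreeGroup.one_eq_mk] using Represents.one
  | cons l L ih =>
    have h1 : FreeGroup.mk (l :: L) = FreeGroup.mk [l] * FreeGroup.mk L := by
      rw [FreeGroup.mul_mk]; rfl
    rw [h1, map_mul]
    have h2 : wordEval A (l :: L) = letterEval A l * wordEval A L := by simp [wordEval]
    rw [h2]
    refine Represents.mul ?_ ih
    obtain ⟨i, b⟩ := l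
    cases b
    · have : (FreeGroup.mk [(i, false)]) = (FreeGroup.of i)⁻¹ := rfl
      rw [this, map_inv]
      exact (h i).adjugate
    · exact h i

lemma represents_toWord [DecidableEq ι] {A : ι → Matrix (Fin 2) (Fin 2) K} {ρ : FreeGroup ι →* PGL(2, K)}
    (h : ∀ i, Represents (A i) (ρ (FreeGroup.of i))) (w : FreeGroup ι) :
    Represents (wordEval A w.toWord) (ρ w) := by
  simpa [FreeGroup.mk_toWord] using represents_wordEval h w.toWord

lemma represents_iterate [DecidableEq ι] {A : ι → Matrix (Fin 2) (Fin 2) K} {ρ : FreeGroup ι →* PGL(2, K)}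
    (h : ∀ i, Represents (A i) (ρ (FreeGroup.of i))) (φ : FreeGroup ι →* FreeGroup ι) (N : ℕ) :
    ∃ ρ' : FreeGroup ι →* PGL(2, K), (∀ w, ρ' w = ρ (φ^[N] w)) ∧
      ∀ i, Represents ((endoMap φ)^[N] A i) (ρ' (FreeGroup.of i)) := by
  induction N with
  | zero => exact ⟨ρ, fun w => rfl, h⟩
  | succ N ih =>
    obtain ⟨ρ', h1, h2⟩ := ih
    refine ⟨ρ'.comp φ, fun w => ?_, fun i => ?_⟩
    · simp [h1]
    · rw [Function.iterate_succ_apply']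
      exact represents_toWord h2 _

lemma exists_represented {A : ι → Matrix (Fin 2) (Fin 2) K} (hA : ∀ i, (A i).det ≠ 0) :
    ∃ ρ : FreeGroup ι →* PGL(2, K), ∀ i, Represents (A i) (ρ (FreeGroup.of i)) :=
  ⟨FreeGroup.lift fun i => ProjGenLinGroup.mk (GeneralLinearGroup.mkOfDetNeZero (A i) (hA i)),
    fun i => ⟨GeneralLinearGroup.mkOfDetNeZero (A i) (hA i), rfl, by simp⟩⟩

end Words

/-! ### Invertible matrices without scalar word values -/

section Generic

open Matrix

/-- The rank-one matrix `(1, x_l)ᵀ (-x_{l⁻¹}, 1)` attached to a signed letter `l`, where `x` is an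
assignment of scalars to signed letters. Its adjugate is the negative of the matrix attached to
`l⁻¹`. -/
def rankOne {α R : Type*} [CommRing R] (x : α × Bool → R) (l : α × Bool) :
    Matrix (Fin 2) (Fin 2) R :=
  !![-x (l.1, !l.2), 1; -(x l * x (l.1, !l.2)), x l]

/-- At the rank-one matrices with pairwise distinct parameters, every nonempty reduced word has a
nonzero second column: multiplication by a letter scales it by `x_{l'} - x_{l⁻¹}`, where `l'` is
the next letter. -/
lemma wordEval_rankOne {α R : Type*} [CommRing R] [IsDomain R] {x : α × Bool → R}
    (hx : Function.Injective x) (L : List (α × Bool)) : ∀ l, FreeGroup.IsReduced (l :: L) →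
      wordEval (fun i => rankOne x (i, true)) (l :: L) 0 1 ≠ 0 ∧
      wordEval (fun i => rankOne x (i, true)) (l :: L) 1 1 =
        x l * wordEval (fun i => rankOne x (i, true)) (l :: L) 0 1 := by
  have key : ∀ l : α × Bool, ∃ e : R, e ≠ 0 ∧
      letterEval (fun i => rankOne x (i, true)) l = e • rankOne x l := by
    rintro ⟨i, b⟩
    cases b
    · refine ⟨-1, by simp, ?_⟩
      ext r c
      fin_cases r <;> fin_cases c <;> simp [letterEval, rankOne, Matrix.adjugate_fin_two, mul_comm]
    · exact ⟨1, one_ne_zero, by simp [letterEval]⟩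
  induction L with
  | nil =>
    intro l _
    obtain ⟨e, he, h⟩ := key l
    have h1 : wordEval (fun i => rankOne x (i, true)) [l] = e • rankOne x l := by
      rw [← h]; simp [wordEval]
    rw [h1]
    simp [rankOne, he, mul_comm]
  | cons l' L ih =>
    intro l hl
    obtain ⟨e, he, h⟩ := key l
    rw [FreeGroup.isReduced_cons_cons] at hl
    obtain ⟨h1, h2⟩ := ih l' hl.2
    have hne : x l' - x (l.1, !l.2) ≠ 0 := by
      rw [sub_ne_zero]
      intro hEq
      have := hx hEq
      subst this
      simp at hl
    have hcons : wordEval (fun i => rankOne x (i, true)) (l :: l' :: L) =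
        e • rankOne x l * wordEval (fun i => rankOne x (i, true)) (l' :: L) := by
      rw [← h]; simp [wordEval]
    rw [hcons]
    generalize wordEval (fun i => rankOne x (i, true)) (l' :: L) = M at h1 h2
    have h01 : (e • rankOne x l * M) 0 1 = e * ((x l' - x (l.1, !l.2)) * M 0 1) := by
      simp [Matrix.mul_apply, rankOne, h2]; ring
    refine ⟨?_, ?_⟩
    · rw [h01]
      exact mul_ne_zero he (mul_ne_zero hne h1)
    · rw [h01]
      simp [Matrix.mul_apply, rankOne, h2]; ring

/-- Over a suitable field of characteristic `p` there are invertible matrices at which no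
nontrivial reduced word takes a scalar value. They deform the rank-one matrices `Q` to
`Q + S • adj Q`. -/
lemma exists_generic (p : ℕ) [Fact p.Prime] (ι : Type) [DecidableEq ι] :
    ∃ (K : Type) (_ : Field K) (_ : Algebra (ZMod p) K) (A : ι → Matrix (Fin 2) (Fin 2) K),
      (∀ i, (A i).det ≠ 0) ∧ ∀ w : FreeGroup ι, w ≠ 1 → wordEval A w.toWord 0 1 ≠ 0 := by
  let R := MvPolynomial (ι × Bool) (ZMod p)
  let x : ι × Bool → R := X
  have hx : Function.Injective x := X_injective
  let A₁ : ι → Matrix (Fin 2) (Fin 2) (Polynomial R) := fun i =>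
    (Polynomial.C (R := R)).mapMatrix (rankOne x (i, true)) +
      (Polynomial.X (R := R)) • (Polynomial.C (R := R)).mapMatrix (rankOne x (i, true)).adjugate
  have hspec : ∀ i, (Polynomial.evalRingHom (0 : R)).mapMatrix (A₁ i) = rankOne x (i, true) := by
    intro i
    ext r c
    simp [A₁]
  let j := algebraMap (Polynomial R) (FractionRing (Polynomial R))
  have hj : Function.Injective j := IsFractionRing.injective _ _
  refine ⟨FractionRing (Polynomial R), inferInstance, inferInstance,
    fun i => j.mapMatrix (A₁ i), fun i => ?_, fun w hw => ?_⟩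
  · rw [← RingHom.map_det]
    refine (map_ne_zero_iff j hj).2 ?_
    have hd : (A₁ i).det =
        Polynomial.X * Polynomial.C ((x (i, true) - x (i, false)) ^ 2) := by
      rw [Matrix.det_fin_two]
      simp [A₁, rankOne, Matrix.adjugate_fin_two]
      ring
    rw [hd]
    refine mul_ne_zero Polynomial.X_ne_zero (Polynomial.C_ne_zero.2 (pow_ne_zero _ ?_))
    rw [sub_ne_zero]
    exact fun h => by simpa using hx h
  · rw [← map_wordEval]
    refine (map_ne_zero_iff j hj).2 fun h0 => ?_
    have h1 := map_wordEval (Polynomial.evalRingHom (0 : R)) A₁ w.toWord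
    simp only [hspec] at h1
    have hr := FreeGroup.isReduced_toWord (x := w)
    cases hL : w.toWord with
    | nil => exact hw (FreeGroup.toWord_eq_nil_iff.1 hL)
    | cons l L =>
      rw [hL] at hr h0 h1
      apply (wordEval_rankOne hx L l hr).1
      rw [← h1]
      simp [h0]

end Generic

/-! ### Generic matrices and Frobenius -/

section GenericMatrices

open Matrix

variable {ι : Type}

/-- The family of `2 × 2` matrices with the given entries. -/
def toMatrices {R : Type*} (a : ι × Fin 2 × Fin 2 → R) (i : ι) : Matrix (Fin 2) (Fin 2) R :=
  Matrix.of fun r c => a (i, r, c)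

/-- The coordinates of the polynomial map `endoMap φ`: entries of the values of the words `φ(xᵢ)`
at generic matrices. -/
noncomputable def entryPoly [DecidableEq ι] (k : Type) [CommRing k] (φ : FreeGroup ι →* FreeGroup ι)
    (z : ι × Fin 2 × Fin 2) : MvPolynomial (ι × Fin 2 × Fin 2) k :=
  endoMap φ (toMatrices X) z.1 z.2.1 z.2.2

variable {k S : Type} [CommRing k] [CommRing S] [Algebra k S]

lemma mapMatrix_aeval (a : ι × Fin 2 × Fin 2 → S) (i : ι) :
    (aeval a : MvPolynomial (ι × Fin 2 × Fin 2) k →ₐ[k] S).toRingHom.mapMatrix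
      (toMatrices X i) = toMatrices a i := by
  ext r c
  simp [toMatrices]

lemma aeval_wordEval (a : ι × Fin 2 × Fin 2 → S) (L : List (ι × Bool)) (r c : Fin 2) :
    aeval a (wordEval (toMatrices (X : _ → MvPolynomial (ι × Fin 2 × Fin 2) k)) L r c) =
      wordEval (toMatrices a) L r c := by
  have h := map_wordEval (aeval a : MvPolynomial (ι × Fin 2 × Fin 2) k →ₐ[k] S).toRingHom
    (toMatrices X) L
  simp only [mapMatrix_aeval] at h
  have h' := congrFun (congrFun h r) c
  simpa using h'

lemma aeval_det (a : ι × Fin 2 × Fin 2 → S) (i : ι) :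
    aeval a (toMatrices (X : _ → MvPolynomial (ι × Fin 2 × Fin 2) k) i).det =
      (toMatrices a i).det := by
  simp [Matrix.det_fin_two, toMatrices]

lemma toMatrices_aeval_entryPoly [DecidableEq ι] (φ : FreeGroup ι →* FreeGroup ι)
    (a : ι × Fin 2 × Fin 2 → S) :
    toMatrices (fun z => aeval a (entryPoly k φ z)) = endoMap φ (toMatrices a) := by
  funext i
  ext r c
  exact aeval_wordEval a _ r c

lemma aeval_iterate_bind₁ {σ : Type*} (f : σ → MvPolynomial σ k) (N : ℕ)
    (D : MvPolynomial σ k) : ∀ a : σ → S,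
      aeval a ((bind₁ f)^[N] D) = aeval ((fun b z => aeval b (f z))^[N] a) D := by
  induction N with
  | zero => intro a; rfl
  | succ N ih =>
    intro a
    rw [Function.iterate_succ_apply', aeval_bind₁, ih, Function.iterate_succ_apply]

lemma toMatrices_iterate [DecidableEq ι] (φ : FreeGroup ι →* FreeGroup ι) (N : ℕ)
    (a : ι × Fin 2 × Fin 2 → S) :
    toMatrices ((fun b z => aeval b (entryPoly k φ z))^[N] a) =
      (endoMap φ)^[N] (toMatrices a) := by
  induction N with
  | zero => rfl
  | succ N ih =>
    rw [Function.iterate_succ_apply', Function.iterate_succ_apply', ← ih]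
    exact toMatrices_aeval_entryPoly φ _

/-- Invertible matrices over a finite field on which `endoMap φ` acts as a power of Frobenius, and
at which the word `w` has a nonscalar value. -/
lemma exists_frobenius_matrices (p : ℕ) [Fact p.Prime] [Fintype ι] [DecidableEq ι]
    (φ : FreeGroup ι →* FreeGroup ι) (hφ : Function.Injective φ) (w : FreeGroup ι) (hw : w ≠ 1) :
    ∃ (F : Type) (_ : Field F) (_ : Finite F) (_ : Algebra (ZMod p) F) (s : ℕ)
      (B : ι → Matrix (Fin 2) (Fin 2) F),
      (∀ i, endoMap φ B i = (B i).map (· ^ p ^ s)) ∧ (∀ i, (B i).det ≠ 0) ∧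
        wordEval B w.toWord 0 1 ≠ 0 := by
  let D : MvPolynomial (ι × Fin 2 × Fin 2) (ZMod p) :=
    (∏ i, (toMatrices X i).det) * wordEval (toMatrices X) w.toWord 0 1
  have hDa : ∀ {S : Type} [CommRing S] [Algebra (ZMod p) S] (a : ι × Fin 2 × Fin 2 → S),
      aeval a D = (∏ i, (toMatrices a i).det) * wordEval (toMatrices a) w.toWord 0 1 := by
    intro S _ _ a
    simp only [D, map_mul, map_prod, aeval_wordEval, aeval_det]
  obtain ⟨F, _, _, _, s, a, ha, haD⟩ := exists_quasi_fixed p (entryPoly (ZMod p) φ) D (by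
    intro h0
    obtain ⟨K, _, _, A, hA, hAw⟩ := exists_generic p ι
    generalize Fintype.card (ι × Fin 2 × Fin 2) = N at h0
    have h1 := aeval_iterate_bind₁ (entryPoly (ZMod p) φ) N D
      (fun z : ι × Fin 2 × Fin 2 => A z.1 z.2.1 z.2.2)
    rw [h0, map_zero, hDa, toMatrices_iterate] at h1
    have hAA : toMatrices (fun z : ι × Fin 2 × Fin 2 => A z.1 z.2.1 z.2.2) = A := rfl
    rw [hAA] at h1
    obtain ⟨ρ, hρ⟩ := exists_represented hA
    obtain ⟨ρ', hρ'1, hρ'2⟩ := represents_iterate hρ φ N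
    -- `w` at the iterated matrices and `φ^[N] w` at the original ones represent the same element.
    have hr := represents_toWord hρ'2 w
    rw [hρ'1] at hr
    obtain ⟨c, hc, hcM⟩ := (represents_toWord hρ (φ^[N] w)).exists_smul hr
    have hNw : φ^[N] w ≠ 1 := by
      intro h
      have h2 : φ^[N] 1 = 1 := iterate_map_one φ N
      exact hw (hφ.iterate N (h.trans h2.symm))
    refine mul_ne_zero ?_ ?_ h1.symm
    · exact Finset.prod_ne_zero_iff.2 fun i _ => (hρ'2 i).det_ne_zero
    · rw [hcM]
      exact mul_ne_zero hc (hAw _ hNw))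
  rw [hDa] at haD
  refine ⟨F, inferInstance, inferInstance, inferInstance, s, toMatrices a, fun i => ?_,
    fun i => Finset.prod_ne_zero_iff.1 (left_ne_zero_of_mul haD) i (Finset.mem_univ i),
    right_ne_zero_of_mul haD⟩
  rw [← toMatrices_aeval_entryPoly (k := ZMod p)]
  ext r c
  exact ha (i, r, c)

end GenericMatrices

/-! ### Finite quotients of the free group compatible with the endomorphism -/

section Separation

open Matrix
open scoped MatrixGroups

/-- The automorphism of `PGL₂(F)` induced by an automorphism of the field `F`. -/
def pglAut {F : Type*} [Field F] (e : F ≃+* F) : MulAut PGL(2, F) :=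
  MonoidHom.toMulEquiv (ProjGenLinGroup.map (e : F →+* F)) (ProjGenLinGroup.map (e.symm : F →+* F))
    (by rw [← ProjGenLinGroup.map_comp]; simp)
    (by rw [← ProjGenLinGroup.map_comp]; simp)

lemma Represents.pglAut {F : Type*} [Field F] {M : Matrix (Fin 2) (Fin 2) F} {x : PGL(2, F)}
    (h : Represents M x) (e : F ≃+* F) : Represents (M.map e) (pglAut e x) := by
  obtain ⟨g, rfl, rfl⟩ := h
  exact ⟨GeneralLinearGroup.map (e : F →+* F) g, rfl, rfl⟩

/-- Nontrivial elements of the free group are separated from `1` by homomorphisms to a finite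
group in which `φ` extends to conjugation by some element `u`. -/
lemma exists_finite_separating {ι : Type} [Fintype ι] [DecidableEq ι]
    (φ : FreeGroup ι →* FreeGroup ι) (hφ : Function.Injective φ) (w : FreeGroup ι) (hw : w ≠ 1) :
    ∃ (H : Type) (_ : Group H) (_ : Finite H) (ψ : FreeGroup ι →* H) (u : H),
      (∀ i, u * ψ (FreeGroup.of i) * u⁻¹ = ψ (φ (FreeGroup.of i))) ∧ ψ w ≠ 1 := by
  obtain ⟨F, _, _, _, s, B, hB, hdet, hBw⟩ := exists_frobenius_matrices 2 φ hφ w hw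
  have : CharP F 2 := charP_of_injective_algebraMap (algebraMap (ZMod 2) F).injective 2
  obtain ⟨ρ, hρ⟩ := exists_represented hdet
  let θ : MulAut PGL(2, F) := pglAut (iterateFrobeniusEquiv F 2 s)
  have : Finite PGL(2, F) := Finite.of_surjective _ ProjGenLinGroup.mk_surjective
  have : Finite (MulAut PGL(2, F)) := MulEquiv.finite_left
  refine ⟨PGL(2, F) ⋊[MonoidHom.id (MulAut PGL(2, F))] MulAut PGL(2, F), inferInstance,
    Finite.of_equiv _ SemidirectProduct.equivProd.symm,
    SemidirectProduct.inl.comp ρ, SemidirectProduct.inr θ, fun i => ?_, fun h => ?_⟩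
  · have h1 : ρ (φ (FreeGroup.of i)) = θ (ρ (FreeGroup.of i)) := by
      refine (represents_toWord hρ (φ (FreeGroup.of i))).unique ?_
      have h2 := (hρ i).pglAut (iterateFrobeniusEquiv F 2 s)
      have h3 : (B i).map (iterateFrobeniusEquiv F 2 s) = wordEval B (φ (FreeGroup.of i)).toWord :=
        (hB i).symm
      rwa [h3] at h2
    rw [MonoidHom.comp_apply, MonoidHom.comp_apply, h1, ← map_inv]
    exact (SemidirectProduct.inl_aut θ _).symm
  · have h1 : ρ w = 1 := SemidirectProduct.inl_injective (h.trans (map_one _).symm)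
    have h2 := represents_toWord hρ w
    rw [h1] at h2
    -- A representative of `1` is a scalar matrix.
    obtain ⟨c, -, hc⟩ := Represents.one.exists_smul h2
    apply hBw
    rw [hc]
    simp

end Separation

/-! ### Ascending HNN extensions -/

section HNN

variable {n : ℕ} (φ : FreeGroup (Fin n) →* FreeGroup (Fin n))

/-- The canonical map from the free group to its ascending HNN extension. -/
def baseMap : FreeGroup (Fin n) →* PresentedGroup (HNNRels n φ) :=
  (PresentedGroup.mk (HNNRels n φ)).comp (FreeGroup.map Sum.inl)

/-- The stable letter of the ascending HNN extension. -/
def stableLetter : PresentedGroup (HNNRels n φ) := PresentedGroup.of (Sum.inr ())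

lemma stableLetter_conj (w : FreeGroup (Fin n)) :
    stableLetter φ * baseMap φ w * (stableLetter φ)⁻¹ = baseMap φ (φ w) := by
  have h : (MulAut.conj (stableLetter φ)).toMonoidHom.comp (baseMap φ) = (baseMap φ).comp φ := by
    ext i
    have h1 := PresentedGroup.one_of_mem (rels := HNNRels n φ) ⟨i, rfl⟩
    simp only [map_mul, map_inv] at h1
    exact mul_inv_eq_one.1 h1
  exact DFunLike.congr_fun h w

lemma stableLetter_pow_mul (w : FreeGroup (Fin n)) (b : ℕ) :
    stableLetter φ ^ b * baseMap φ w = baseMap φ (φ^[b] w) * stableLetter φ ^ b := by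
  induction b with
  | zero => simp
  | succ b ih =>
    rw [pow_succ', mul_assoc, ih, ← mul_assoc, Function.iterate_succ_apply', ← stableLetter_conj]
    group

/-- Every element of the ascending HNN extension has the form `t⁻ᵃ w tᵇ` with `w` in the base. -/
lemma exists_normal_form (g : PresentedGroup (HNNRels n φ)) :
    ∃ (a b : ℕ) (w : FreeGroup (Fin n)),
      g = (stableLetter φ ^ a)⁻¹ * baseMap φ w * stableLetter φ ^ b := by
  have hbase : ∀ (a b : ℕ) (w v : FreeGroup (Fin n)),
      (stableLetter φ ^ a)⁻¹ * baseMap φ w * stableLetter φ ^ b * baseMap φ v =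
        (stableLetter φ ^ a)⁻¹ * baseMap φ (w * φ^[b] v) * stableLetter φ ^ b := by
    intro a b w v
    rw [mul_assoc _ _ (baseMap φ v), stableLetter_pow_mul, map_mul]
    group
  have hg : g ∈ Subgroup.closure (Set.range (PresentedGroup.of (rels := HNNRels n φ))) := by
    rw [PresentedGroup.closure_range_of]
    exact Subgroup.mem_top g
  induction hg using Subgroup.closure_induction_right with
  | one => exact ⟨0, 0, 1, by simp⟩
  | mul_right x _ y hy ih =>
    obtain ⟨a, b, w, rfl⟩ := ih
    obtain ⟨i | i, rfl⟩ := hy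
    · exact ⟨a, b, _, hbase a b w (FreeGroup.of i)⟩
    · exact ⟨a, b + 1, w, by rw [pow_succ, ← mul_assoc]; rfl⟩
  | mul_inv_cancel x _ y hy ih =>
    obtain ⟨a, b, w, rfl⟩ := ih
    obtain ⟨i | i, rfl⟩ := hy
    · refine ⟨a, b, _, Eq.trans ?_ (hbase a b w (FreeGroup.of i)⁻¹)⟩
      rw [map_inv]
      rfl
    · refine ⟨a + 1, b, φ w, ?_⟩
      rw [← stableLetter_conj]
      change _ * (stableLetter φ)⁻¹ = _
      group

/-- A homomorphism out of the ascending HNN extension, given on the base and on the stable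
letter. -/
def hnnLift {H : Type*} [Group H] (ψ : FreeGroup (Fin n) →* H) (u : H)
    (h : ∀ i, u * ψ (FreeGroup.of i) * u⁻¹ = ψ (φ (FreeGroup.of i))) :
    PresentedGroup (HNNRels n φ) →* H :=
  PresentedGroup.toGroup (rels := HNNRels n φ) (f := Sum.elim (fun i => ψ (FreeGroup.of i)) fun _ => u) (by
    rintro r ⟨i, rfl⟩
    have h1 : (FreeGroup.lift (Sum.elim (fun i => ψ (FreeGroup.of i)) fun _ : Unit => u)).comp
        (FreeGroup.map Sum.inl) = ψ := by
      ext i; simp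
    have h2 := DFunLike.congr_fun h1 (φ (FreeGroup.of i))
    rw [MonoidHom.comp_apply] at h2
    simp only [map_mul, map_inv, h2, ← h]
    simp)

lemma hnnLift_stableLetter {H : Type*} [Group H] (ψ : FreeGroup (Fin n) →* H) (u : H)
    (h : ∀ i, u * ψ (FreeGroup.of i) * u⁻¹ = ψ (φ (FreeGroup.of i))) :
    hnnLift φ ψ u h (stableLetter φ) = u := by
  simp [hnnLift, stableLetter]

lemma hnnLift_baseMap {H : Type*} [Group H] (ψ : FreeGroup (Fin n) →* H) (u : H)
    (h : ∀ i, u * ψ (FreeGroup.of i) * u⁻¹ = ψ (φ (FreeGroup.of i))) (w : FreeGroup (Fin n)) :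
    hnnLift φ ψ u h (baseMap φ w) = ψ w := by
  have h1 : (hnnLift φ ψ u h).comp (baseMap φ) = ψ := by
    ext i
    change hnnLift φ ψ u h (PresentedGroup.of (Sum.inl i)) = _
    simp [hnnLift]
  exact DFunLike.congr_fun h1 w

end HNN

end BorisovSapir

/-- (Borisov–Sapir) For every `n ≥ 1` and every injective endomorphism `φ` of the
free group `Fₙ`, the ascending HNN extension `HNN_φ(Fₙ)` is residually finite. -/
theorem hnn_of_free_group_residually_finite (n : ℕ) (hn : 1 ≤ n)
    (φ : FreeGroup (Fin n) →* FreeGroup (Fin n)) (hφ : Function.Injective φ) :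
    ResiduallyFinite (PresentedGroup (HNNRels n φ)) := by
  open BorisovSapir in
  intro g hg
  obtain ⟨a, b, w, rfl⟩ := exists_normal_form φ g
  by_cases hab : a = b
  · subst hab
    have hw : w ≠ 1 := by
      rintro rfl
      simp at hg
    obtain ⟨H, _, _, ψ, u, hu, hψ⟩ := exists_finite_separating φ hφ w hw
    refine ⟨H, inferInstance, inferInstance, hnnLift φ ψ u hu, fun h => hψ ?_⟩
    simp only [map_mul, map_inv, map_pow, hnnLift_baseMap, hnnLift_stableLetter] at h
    rwa [mul_assoc, inv_mul_eq_one, right_eq_mul] at h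
  · have : NeZero (a + b + 1) := ⟨by omega⟩
    -- The exponent sum of the stable letter is `b - a ≠ 0`, and survives modulo `a + b + 1`.
    refine ⟨Multiplicative (ZMod (a + b + 1)), inferInstance, inferInstance,
      hnnLift φ 1 (Multiplicative.ofAdd 1) (by simp), fun h => hab ?_⟩
    simp only [map_mul, map_inv, map_pow, hnnLift_baseMap, hnnLift_stableLetter,
      MonoidHom.one_apply, mul_one, inv_mul_eq_one] at h
    have h' : ((a : ℕ) : ZMod (a + b + 1)) = (b : ℕ) := by
      have := congrArg Multiplicative.toAdd h
      simpa using this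
    rw [ZMod.natCast_eq_natCast_iff'] at h'
    rwa [Nat.mod_eq_of_lt (by omega), Nat.mod_eq_of_lt (by omega)] at h'
end
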